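/- Let the input be a centered stationary Gaussian process {X_{j,k}} with absolutely continuous spectral measure of density f(x,y) = |xy|^{−1/2} on [−π,π]². Then the fourth moment of the limiting spectral distribution is infinite: ∫_ℝ x⁴ μ_f(dx) = ∞. -/

import Mathlib

open MeasureTheory ProbabilityTheory Filter Real

noncomputable section

/-- The square `(-π, π]²` on which the spectral measure lives. -/
def specBox : Set (ℝ × ℝ) := Set.Ioc (-π) π ×ˢ Set.Ioc (-π) π

/-- `(1/N) ∑_j g(λ_j(A))`, the integral of `g` against the empirical spectral
distribution of a symmetric `N × N` real matrix `A` (junk value `0` if `A` is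
not symmetric). -/
def esdEval {N : ℕ} (A : Matrix (Fin N) (Fin N) ℝ) (g : ℝ → ℝ) : ℝ :=
  if hA : A.IsHermitian then (N : ℝ)⁻¹ * ∑ j, g (hA.eigenvalues j) else 0

/-- The (random) empirical spectral distributions of `A N` converge weakly in
probability to the probability measure `μ`: for every bounded continuous `g`,
`∫ g d(ESD(A N)) → ∫ g dμ` in probability. -/
def ESDTendstoInProb {Ω : Type*} [MeasurableSpace Ω] (P : Measure Ω)
    (A : (N : ℕ) → Ω → Matrix (Fin N) (Fin N) ℝ) (μ : Measure ℝ) : Prop :=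
  ∀ g : ℝ → ℝ, Continuous g → (∃ C, ∀ x, |g x| ≤ C) →
    ∀ ε > 0, Tendsto (fun N => P {ω | ε ≤ |esdEval (A N ω) g - ∫ x, g x ∂μ|})
      atTop (nhds 0)

/-- The symmetric matrix `W_N/√N`, where `W_N(i,j) = X_{i,j} + X_{j,i}`,
`1 ≤ i,j ≤ N`. -/
def scaledW {Ω : Type*} (X : ℤ → ℤ → Ω → ℝ) (N : ℕ) (ω : Ω) :
    Matrix (Fin N) (Fin N) ℝ :=
  fun i j => (Real.sqrt N)⁻¹ *
    (X ((i : ℕ) + 1) ((j : ℕ) + 1) ω + X ((j : ℕ) + 1) ((i : ℕ) + 1) ω)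

/-- A centered stationary Gaussian process indexed by `ℤ²` with positive
variance: every finite real linear combination is a centered Gaussian random
variable, and second moments are shift invariant. -/
structure StatGauss {Ω : Type*} [MeasurableSpace Ω] (P : Measure Ω)
    (X : ℤ → ℤ → Ω → ℝ) : Prop where
  meas : ∀ j k, Measurable (X j k)
  gauss : ∀ c : (ℤ × ℤ) →₀ ℝ, ∃ v : NNReal,
    P.map (fun ω => ∑ p ∈ c.support, c p * X p.1 p.2 ω) = gaussianReal 0 v
  var_pos : 0 < ∫ ω, (X 0 0 ω) ^ 2 ∂P
  stat : ∀ j k u v : ℤ,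
    ∫ ω, X j k ω * X (j + u) (k + v) ω ∂P = ∫ ω, X 0 0 ω * X u v ω ∂P

/-- The process `X` has absolutely continuous spectral measure with density
`h` on `(-π,π]²`: `E[X_{0,0} X_{u,v}] = ∫∫ e^{i(ux+vy)} h(x,y) dx dy`. -/
def HasSpecDensity {Ω : Type*} [MeasurableSpace Ω] (P : Measure Ω)
    (X : ℤ → ℤ → Ω → ℝ) (h : ℝ × ℝ → ℝ) : Prop :=
  ∀ u v : ℤ,
    (∫ q in specBox,
        Complex.exp (Complex.I * ((u * q.1 + v * q.2 : ℝ) : ℂ)) * ((h q : ℝ) : ℂ))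
      = ((∫ ω, X 0 0 ω * X u v ω ∂P : ℝ) : ℂ)

/-!
The covariance of the field is a product of cosine coefficients of `w`, so the normalized matrix
`Z = (X_{i,j}) / √N` is matrix normal with covariances `T / N` and `T`, where `T` is the Toeplitz
matrix with symbol `w`. For a symmetric matrix `A` and a positive semidefinite `S`, convexity in the
form `t⁴ ≥ 2 t² s - s²`, applied in an eigenbasis of `A`, gives `tr A⁴ ≥ 2 tr (A² S) - tr S²`. With
`A = Z + Zᵀ` and `S` equal to `2 ∫ w` times the Toeplitz matrix `T_n` with symbol `min w n`, the
expected fourth moment of the empirical spectral distribution is at least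
`(2 ∫ w)² tr (T_n²) / N`, which by Parseval's identity tends to `(2 ∫ w)² 2π ∫ (min w n)²` as
`N → ∞`. This is unbounded in `n` because `w²` is not integrable.

Convergence in probability only sees bounded test functions, so `t⁴` has to be capped at `Q²`. To
control the loss, compress `Z` by a spectral projection of `T`: the compression has bounded
covariance, hence a fourth moment of order `N` by Isserlis' formula, and the loss it causes vanishes
as `Q → ∞`. The remainder of `Z` is small in `L²` since `∫ (w - min w m) → 0` as `m → ∞`.
-/

section GaussianMoments

open Polynomial in
lemma iteratedDeriv_exp_mul_sq_div_two (v : ℝ) (n : ℕ) :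
    iteratedDeriv n (fun t => rexp (v * t ^ 2 / 2)) = fun t =>
      ((fun p : ℝ[X] => derivative p + C v * X * p)^[n] 1).eval t * rexp (v * t ^ 2 / 2) := by
  induction n with
  | zero => simp
  | succ n ih =>
    rw [iteratedDeriv_succ, ih, Function.iterate_succ_apply']
    set p := (fun p : ℝ[X] => derivative p + C v * X * p)^[n] 1
    funext t
    have hexponent : HasDerivAt (fun t : ℝ => v * t ^ 2 / 2) (v * t) t :=
      (((hasDerivAt_pow 2 t).const_mul v).div_const 2).congr_deriv (by
        simp only [Nat.cast_ofNat, Nat.add_one_sub_one, pow_one]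
        ring)
    refine ((p.hasDerivAt t).mul hexponent.exp).deriv.trans ?_
    simp only [eval_add, eval_mul, eval_C, eval_X]
    ring

open Polynomial in
lemma integral_pow_gaussianReal (v : NNReal) (n : ℕ) :
    ∫ x, x ^ n ∂gaussianReal 0 v =
      ((fun p : ℝ[X] => derivative p + C (v : ℝ) * X * p)^[n] 1).eval 0 := by
  have hmgf : mgf id (gaussianReal 0 v) = fun t => rexp (v * t ^ 2 / 2) := by
    rw [mgf_id_gaussianReal]; simp
  have hmoment := iteratedDeriv_mgf_zero (X := id) (μ := gaussianReal 0 v) (by simp) n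
  rw [hmgf, iteratedDeriv_exp_mul_sq_div_two] at hmoment
  simpa using hmoment.symm

lemma integral_sq_gaussianReal (v : NNReal) : ∫ x, x ^ 2 ∂gaussianReal 0 v = v := by
  simp [integral_pow_gaussianReal]

open Polynomial in
lemma integral_pow_four_gaussianReal (v : NNReal) :
    ∫ x, x ^ 4 ∂gaussianReal 0 v = 3 * (v : ℝ) ^ 2 := by
  rw [integral_pow_gaussianReal]
  simp only [Function.iterate_succ_apply', Function.iterate_zero, id, derivative_one, mul_one,
    zero_add, derivative_mul, derivative_C, zero_mul, derivative_X, derivative_add, mul_zero,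
    add_zero, eval_add, eval_mul, eval_C, eval_X]
  ring

end GaussianMoments

/-- A linear space `G` of random variables all of which are centered Gaussian (possibly
degenerate), so that any finite family in `G` is jointly Gaussian. -/
def IsCenteredGaussianSpace {Ω : Type*} [MeasurableSpace Ω] (P : Measure Ω)
    (G : Submodule ℝ (Ω → ℝ)) : Prop :=
  ∀ f ∈ G, ∃ v : NNReal, HasLaw f (gaussianReal 0 v) P

namespace IsCenteredGaussianSpace

variable {Ω : Type*} [MeasurableSpace Ω] {P : Measure Ω}
  {G : Submodule ℝ (Ω → ℝ)} {f g h k : Ω → ℝ}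

lemma memLp_four (hG : IsCenteredGaussianSpace P G) (hf : f ∈ G) : MemLp f 4 P := by
  obtain ⟨v, hv⟩ := hG f hf
  refine (memLp_map_measure_iff (g := id) (by fun_prop) hv.aemeasurable).1 ?_
  rw [hv.map_eq]
  exact memLp_id_gaussianReal 4

lemma integral_pow_four (hG : IsCenteredGaussianSpace P G) (hf : f ∈ G) :
    ∫ ω, f ω ^ 4 ∂P = 3 * (∫ ω, f ω ^ 2 ∂P) ^ 2 := by
  obtain ⟨v, hv⟩ := hG f hf
  have hmoment (n : ℕ) : ∫ ω, f ω ^ n ∂P = ∫ x, x ^ n ∂gaussianReal 0 v := by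
    rw [← hv.map_eq, integral_map hv.aemeasurable (by fun_prop)]
  rw [hmoment, hmoment, integral_sq_gaussianReal, integral_pow_four_gaussianReal]

lemma integrable_mul_mul_mul (hG : IsCenteredGaussianSpace P G) (hf : f ∈ G) (hg : g ∈ G)
    (hh : h ∈ G) (hk : k ∈ G) : Integrable (fun ω => f ω * g ω * (h ω * k ω)) P := by
  have : ENNReal.HolderTriple 4 4 2 := ⟨by
    rw [← ENNReal.toReal_eq_toReal_iff' (by simp) (by simp),
      ENNReal.toReal_add (by simp) (by simp)]
    norm_num⟩
  have hfg : MemLp (fun ω => f ω * g ω) 2 P := (hG.memLp_four hg).mul' (hG.memLp_four hf)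
  have hhk : MemLp (fun ω => h ω * k ω) 2 P := (hG.memLp_four hk).mul' (hG.memLp_four hh)
  exact hfg.integrable_mul hhk

lemma integrable_sq_mul_mul (hG : IsCenteredGaussianSpace P G) (hf : f ∈ G) (hg : g ∈ G)
    (hh : h ∈ G) : Integrable (fun ω => f ω ^ 2 * (g ω * h ω)) P := by
  simpa only [sq] using hG.integrable_mul_mul_mul hf hf hg hh

lemma integrable_sq_mul_sq (hG : IsCenteredGaussianSpace P G) (hf : f ∈ G) (hg : g ∈ G) :
    Integrable (fun ω => f ω ^ 2 * g ω ^ 2) P := by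
  simpa only [sq] using hG.integrable_mul_mul_mul hf hf hg hg

lemma integrable_pow_four (hG : IsCenteredGaussianSpace P G) (hf : f ∈ G) :
    Integrable (fun ω => f ω ^ 4) P :=
  (hG.integrable_sq_mul_sq hf hf).congr (.of_forall fun ω => by ring)

variable [IsProbabilityMeasure P]

lemma integrable_mul (hG : IsCenteredGaussianSpace P G) (hf : f ∈ G) (hg : g ∈ G) :
    Integrable (fun ω => f ω * g ω) P :=
  have two_le_four : (2 : ENNReal) ≤ 4 := by norm_num
  ((hG.memLp_four hf).mono_exponent two_le_four).integrable_mul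
    ((hG.memLp_four hg).mono_exponent two_le_four)

lemma integral_mul_add_smul (hG : IsCenteredGaussianSpace P G) (hf : f ∈ G) (hg : g ∈ G)
    (hh : h ∈ G) (a : ℝ) :
    ∫ ω, f ω * (g + a • h) ω ∂P = ∫ ω, f ω * g ω ∂P + a * ∫ ω, f ω * h ω ∂P := by
  rw [← integral_const_mul,
    ← integral_add (hG.integrable_mul hf hg) ((hG.integrable_mul hf hh).const_mul a)]
  congr! 2 with ω
  simp only [Pi.add_apply, Pi.smul_apply, smul_eq_mul]
  ring

lemma integral_add_smul_sq (hG : IsCenteredGaussianSpace P G) (hf : f ∈ G) (hg : g ∈ G) (a : ℝ) :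
    ∫ ω, (f + a • g) ω ^ 2 ∂P =
      ∫ ω, f ω ^ 2 ∂P + 2 * a * ∫ ω, f ω * g ω ∂P + a ^ 2 * ∫ ω, g ω ^ 2 ∂P := by
  have hfa : f + a • g ∈ G := G.add_mem hf (G.smul_mem a hg)
  have hcomm (k : Ω → ℝ) : ∫ ω, (f + a • g) ω * k ω ∂P = ∫ ω, k ω * (f + a • g) ω ∂P := by
    simp only [mul_comm]
  simp only [sq, hG.integral_mul_add_smul hfa hf hg a, hcomm, hG.integral_mul_add_smul hf hf hg a,
    hG.integral_mul_add_smul hg hf hg a, mul_comm (g _) (f _)]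
  ring

-- Isserlis' formula is obtained by polarizing `E f⁴ = 3 (E f²)²` one pair of factors at a time.
lemma integral_sq_mul_sq (hG : IsCenteredGaussianSpace P G) (hf : f ∈ G) (hg : g ∈ G) :
    ∫ ω, f ω ^ 2 * g ω ^ 2 ∂P =
      (∫ ω, f ω ^ 2 ∂P) * (∫ ω, g ω ^ 2 ∂P) + 2 * (∫ ω, f ω * g ω ∂P) ^ 2 := by
  have hmem (a : ℝ) : f + a • g ∈ G := G.add_mem hf (G.smul_mem a hg)
  have hfg : Integrable (fun ω => f ω ^ 4 + g ω ^ 4) P :=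
    (hG.integrable_pow_four hf).add (hG.integrable_pow_four hg)
  have hpolar : ∫ ω, (f + (1 : ℝ) • g) ω ^ 4 ∂P + ∫ ω, (f + (-1 : ℝ) • g) ω ^ 4 ∂P =
      12 * ∫ ω, f ω ^ 2 * g ω ^ 2 ∂P + 2 * (∫ ω, f ω ^ 4 ∂P + ∫ ω, g ω ^ 4 ∂P) := by
    rw [← integral_add (hG.integrable_pow_four (hmem 1)) (hG.integrable_pow_four (hmem (-1))),
      ← integral_add (hG.integrable_pow_four hf) (hG.integrable_pow_four hg),
      ← integral_const_mul, ← integral_const_mul,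
      ← integral_add ((hG.integrable_sq_mul_sq hf hg).const_mul _)
        (hfg.const_mul _)]
    congr! 2
    simp only [Pi.add_apply, Pi.smul_apply, smul_eq_mul]
    ring
  rw [hG.integral_pow_four (hmem 1), hG.integral_pow_four (hmem (-1)), hG.integral_pow_four hf,
    hG.integral_pow_four hg, hG.integral_add_smul_sq hf hg, hG.integral_add_smul_sq hf hg] at hpolar
  linear_combination -hpolar / 12

lemma integral_sq_mul_mul (hG : IsCenteredGaussianSpace P G) (hf : f ∈ G) (hg : g ∈ G)
    (hh : h ∈ G) :
    ∫ ω, f ω ^ 2 * (g ω * h ω) ∂P = (∫ ω, f ω ^ 2 ∂P) * (∫ ω, g ω * h ω ∂P) +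
      2 * (∫ ω, f ω * g ω ∂P) * ∫ ω, f ω * h ω ∂P := by
  have hmem (a : ℝ) : g + a • h ∈ G := G.add_mem hg (G.smul_mem a hh)
  have hpolar : ∫ ω, f ω ^ 2 * (g + (1 : ℝ) • h) ω ^ 2 ∂P -
      ∫ ω, f ω ^ 2 * (g + (-1 : ℝ) • h) ω ^ 2 ∂P = 4 * ∫ ω, f ω ^ 2 * (g ω * h ω) ∂P := by
    rw [← integral_sub (hG.integrable_sq_mul_sq hf (hmem 1))
      (hG.integrable_sq_mul_sq hf (hmem (-1))), ← integral_const_mul]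
    congr! 2
    simp only [Pi.add_apply, Pi.smul_apply, smul_eq_mul]
    ring
  rw [hG.integral_sq_mul_sq hf (hmem 1), hG.integral_sq_mul_sq hf (hmem (-1)),
    hG.integral_add_smul_sq hg hh, hG.integral_add_smul_sq hg hh,
    hG.integral_mul_add_smul hf hg hh, hG.integral_mul_add_smul hf hg hh] at hpolar
  linear_combination -hpolar / 4

theorem integral_mul_mul_mul (hG : IsCenteredGaussianSpace P G) (hf : f ∈ G) (hg : g ∈ G)
    (hh : h ∈ G) (hk : k ∈ G) :
    ∫ ω, f ω * g ω * (h ω * k ω) ∂P =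
      (∫ ω, f ω * g ω ∂P) * (∫ ω, h ω * k ω ∂P) + (∫ ω, f ω * h ω ∂P) * (∫ ω, g ω * k ω ∂P) +
        (∫ ω, f ω * k ω ∂P) * ∫ ω, g ω * h ω ∂P := by
  have hmem (a : ℝ) : f + a • g ∈ G := G.add_mem hf (G.smul_mem a hg)
  have hlinear {u : Ω → ℝ} (hu : u ∈ G) (a : ℝ) :
      ∫ ω, (f + a • g) ω * u ω ∂P = ∫ ω, f ω * u ω ∂P + a * ∫ ω, g ω * u ω ∂P := by
    simpa only [mul_comm] using hG.integral_mul_add_smul hu hf hg a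
  have hpolar : ∫ ω, (f + (1 : ℝ) • g) ω ^ 2 * (h ω * k ω) ∂P -
      ∫ ω, (f + (-1 : ℝ) • g) ω ^ 2 * (h ω * k ω) ∂P = 4 * ∫ ω, f ω * g ω * (h ω * k ω) ∂P := by
    rw [← integral_sub (hG.integrable_sq_mul_mul (hmem 1) hh hk)
      (hG.integrable_sq_mul_mul (hmem (-1)) hh hk), ← integral_const_mul]
    congr! 2
    simp only [Pi.add_apply, Pi.smul_apply, smul_eq_mul]
    ring
  rw [hG.integral_sq_mul_mul (hmem 1) hh hk, hG.integral_sq_mul_mul (hmem (-1)) hh hk,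
    hG.integral_add_smul_sq hf hg, hG.integral_add_smul_sq hf hg,
    hlinear hh, hlinear hk, hlinear hh, hlinear hk] at hpolar
  linear_combination -hpolar / 4

end IsCenteredGaussianSpace

lemma StatGauss.isCenteredGaussianSpace_span {Ω : Type*} [MeasurableSpace Ω] {P : Measure Ω}
    {X : ℤ → ℤ → Ω → ℝ} (hX : StatGauss P X) :
    IsCenteredGaussianSpace P (Submodule.span ℝ (Set.range fun p : ℤ × ℤ => X p.1 p.2)) := by
  intro f hf
  obtain ⟨c, rfl⟩ := Finsupp.mem_span_range_iff_exists_finsupp.1 hf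
  obtain ⟨v, hv⟩ := hX.gauss c
  have hsum : (c.sum fun p a => a • X p.1 p.2) = fun ω => ∑ p ∈ c.support, c p * X p.1 p.2 ω := by
    funext ω
    simp [Finsupp.sum]
  refine ⟨v, ⟨?_, hsum ▸ hv⟩⟩
  rw [hsum]
  exact (Finset.measurable_sum _ fun p _ => (hX.meas p.1 p.2).const_mul _).aemeasurable

open Matrix in
lemma trace_gram_sq {m n : Type*} [Fintype m] [Fintype n] (M : Matrix m n ℝ) :
    trace (Mᵀ * M * (Mᵀ * M)) =
      ∑ j, ∑ l, ∑ i, ∑ k, M i j * M i l * (M k l * M k j) := by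
  simp only [Matrix.trace, Matrix.diag_apply, Matrix.mul_apply, Matrix.transpose_apply,
    Finset.sum_mul_sum]

/-- The centered matrix normal distribution with row covariance `R` and column covariance `C`:
the entries of `Z` are jointly Gaussian and `E[Z i j * Z k l] = R i k * C j l`. -/
structure IsMatrixNormal {Ω m n : Type*} [MeasurableSpace Ω] (P : Measure Ω)
    (Z : Ω → Matrix m n ℝ) (R : Matrix m m ℝ) (C : Matrix n n ℝ) : Prop where
  gaussian : ∃ G, IsCenteredGaussianSpace P G ∧ ∀ i j, (fun ω => Z ω i j) ∈ G
  cov : ∀ i j k l, ∫ ω, Z ω i j * Z ω k l ∂P = R i k * C j l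

namespace IsMatrixNormal

open Matrix

variable {Ω m n : Type*} [MeasurableSpace Ω] {P : Measure Ω}
  {Z : Ω → Matrix m n ℝ} {R : Matrix m m ℝ} {C : Matrix n n ℝ}

lemma transpose (hZ : IsMatrixNormal P Z R C) : IsMatrixNormal P (fun ω => (Z ω)ᵀ) C R where
  gaussian := let ⟨G, hG, hmem⟩ := hZ.gaussian; ⟨G, hG, fun i j => hmem j i⟩
  cov i j k l := (hZ.cov j i l k).trans (mul_comm _ _)

lemma smul (hZ : IsMatrixNormal P Z R C) (a : ℝ) :
    IsMatrixNormal P (fun ω => a • Z ω) (a ^ 2 • R) C where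
  gaussian := let ⟨G, hG, hmem⟩ := hZ.gaussian; ⟨G, hG, fun i j => G.smul_mem a (hmem i j)⟩
  cov i j k l := by
    simp only [Matrix.smul_apply, smul_eq_mul, mul_mul_mul_comm a, integral_const_mul, hZ.cov]
    ring

lemma integrable_mul_mul_mul (hZ : IsMatrixNormal P Z R C) (i k : m) (j l : n) :
    Integrable (fun ω => Z ω i j * Z ω i l * (Z ω k l * Z ω k j)) P :=
  let ⟨_, hG, hmem⟩ := hZ.gaussian
  hG.integrable_mul_mul_mul (hmem i j) (hmem i l) (hmem k l) (hmem k j)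

lemma integrable_trace_gram_sq [Fintype m] [Fintype n] (hZ : IsMatrixNormal P Z R C) :
    Integrable (fun ω => trace ((Z ω)ᵀ * Z ω * ((Z ω)ᵀ * Z ω))) P := by
  simp only [trace_gram_sq]
  exact integrable_finsetSum _ fun j _ => integrable_finsetSum _ fun l _ =>
    integrable_finsetSum _ fun i _ => integrable_finsetSum _ fun k _ =>
      hZ.integrable_mul_mul_mul i k j l

variable [IsProbabilityMeasure P]

lemma integrable_mul (hZ : IsMatrixNormal P Z R C) (i k : m) (j l : n) :
    Integrable (fun ω => Z ω i j * Z ω k l) P :=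
  let ⟨_, hG, hmem⟩ := hZ.gaussian
  hG.integrable_mul (hmem i j) (hmem k l)

lemma mul_left {m' : Type*} [Fintype m] (hZ : IsMatrixNormal P Z R C) (M : Matrix m' m ℝ) :
    IsMatrixNormal P (fun ω => M * Z ω) (M * R * Mᵀ) C where
  gaussian := by
    obtain ⟨G, hG, hmem⟩ := hZ.gaussian
    refine ⟨G, hG, fun i j => ?_⟩
    have hentry : (fun ω => (M * Z ω) i j) = ∑ k, M i k • fun ω => Z ω k j := by
      funext ω
      simp [Matrix.mul_apply]
    exact hentry ▸ G.sum_mem fun k _ => G.smul_mem _ (hmem k j)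
  cov i j k l := by
    have hexpand (ω : Ω) : (M * Z ω) i j * (M * Z ω) k l =
        ∑ b, ∑ a, M i a * M k b * (Z ω a j * Z ω b l) := by
      simp only [Matrix.mul_apply, Finset.sum_mul_sum]
      rw [Finset.sum_comm]
      exact Finset.sum_congr rfl fun _ _ => Finset.sum_congr rfl fun _ _ => by ring
    have hint (a b : m) : Integrable (fun ω => M i a * M k b * (Z ω a j * Z ω b l)) P :=
      (hZ.integrable_mul a b j l).const_mul _
    simp only [hexpand]
    rw [integral_finsetSum _ fun b _ => integrable_finsetSum _ fun a _ => hint a b]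
    simp only [integral_finsetSum _ fun a _ => hint a _, integral_const_mul, hZ.cov,
      Matrix.mul_apply, Matrix.transpose_apply, Finset.sum_mul]
    exact Finset.sum_congr rfl fun _ _ => Finset.sum_congr rfl fun _ _ => by ring

lemma mul_right {n' : Type*} [Fintype n] (hZ : IsMatrixNormal P Z R C) (M : Matrix n n' ℝ) :
    IsMatrixNormal P (fun ω => Z ω * M) R (Mᵀ * C * M) := by
  simpa only [Matrix.transpose_mul, Matrix.transpose_transpose] using
    (hZ.transpose.mul_left Mᵀ).transpose

section Moments

variable [Fintype m] [Fintype n]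

lemma integrable_trace_transpose_mul_self (hZ : IsMatrixNormal P Z R C) :
    Integrable (fun ω => trace ((Z ω)ᵀ * Z ω)) P :=
  integrable_finsetSum _ fun j _ => integrable_finsetSum _ fun i _ => hZ.integrable_mul i i j j

lemma integral_trace_transpose_mul_self (hZ : IsMatrixNormal P Z R C) :
    ∫ ω, trace ((Z ω)ᵀ * Z ω) ∂P = R.trace * C.trace := by
  have hint := hZ.integrable_mul
  simp only [Matrix.trace, Matrix.diag_apply, Matrix.mul_apply, Matrix.transpose_apply]
  rw [integral_finsetSum _ fun j _ => integrable_finsetSum _ fun i _ => hint i i j j]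
  simp only [integral_finsetSum _ fun i _ => hint i i _ _, hZ.cov, Finset.sum_mul_sum]
  exact Finset.sum_comm

lemma integral_trace_gram_sq (hZ : IsMatrixNormal P Z R C) :
    ∫ ω, trace ((Z ω)ᵀ * Z ω * ((Z ω)ᵀ * Z ω)) ∂P =
      R.trace ^ 2 * trace (C * C) + trace (R * Rᵀ) * trace (C * C) +
        trace (R * Rᵀ) * C.trace ^ 2 := by
  obtain ⟨G, hG, hmem⟩ := hZ.gaussian
  have hisserlis (i k : m) (j l : n) : ∫ ω, Z ω i j * Z ω i l * (Z ω k l * Z ω k j) ∂P =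
      R i i * R k k * (C j l * C l j) + R i k * R i k * (C j l * C l j) +
        R i k * R i k * (C j j * C l l) := by
    rw [hG.integral_mul_mul_mul (hmem i j) (hmem i l) (hmem k l) (hmem k j)]
    simp only [hZ.cov]
    ring
  have hint := hZ.integrable_mul_mul_mul
  simp only [trace_gram_sq]
  rw [integral_finsetSum _ fun j _ => integrable_finsetSum _ fun l _ =>
    integrable_finsetSum _ fun i _ => integrable_finsetSum _ fun k _ => hint i k j l]
  simp_rw [integral_finsetSum _ fun l _ =>
    integrable_finsetSum _ fun i _ => integrable_finsetSum _ fun k _ => hint i k _ l,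
    integral_finsetSum _ fun i _ => integrable_finsetSum _ fun k _ => hint i k _ _,
    integral_finsetSum _ fun k _ => hint _ k _ _, hisserlis, Finset.sum_add_distrib]
  simp only [← Finset.sum_mul, ← Finset.mul_sum, Matrix.trace, Matrix.diag_apply, Matrix.mul_apply,
    Matrix.transpose_apply, sq]

end Moments

section Square

variable {Z : Ω → Matrix m m ℝ} {R C : Matrix m m ℝ}

lemma integrable_add_transpose_mul_apply (hZ : IsMatrixNormal P Z R C) (i j k : m) :
    Integrable (fun ω => (Z ω + (Z ω)ᵀ) i j * (Z ω + (Z ω)ᵀ) j k) P := by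
  simp only [Matrix.add_apply, Matrix.transpose_apply, add_mul, mul_add]
  exact ((hZ.integrable_mul i j j k).add (hZ.integrable_mul j j i k)).add
    ((hZ.integrable_mul i k j j).add (hZ.integrable_mul j k i j))

lemma integral_add_transpose_mul_apply (hZ : IsMatrixNormal P Z R C) (i j k : m) :
    ∫ ω, (Z ω + (Z ω)ᵀ) i j * (Z ω + (Z ω)ᵀ) j k ∂P =
      R i j * C j k + R i k * C j j + (R j j * C i k + C i j * R j k) := by
  simp only [Matrix.add_apply, Matrix.transpose_apply, add_mul, mul_add]
  have hint := hZ.integrable_mul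
  have hrow : Integrable (fun ω => Z ω i j * Z ω j k + Z ω j i * Z ω j k) P :=
    (hint i j j k).add (hint j j i k)
  have hcol : Integrable (fun ω => Z ω i j * Z ω k j + Z ω j i * Z ω k j) P :=
    (hint i k j j).add (hint j k i j)
  rw [integral_add hrow hcol, integral_add (hint i j j k) (hint j j i k),
    integral_add (hint i k j j) (hint j k i j)]
  simp only [hZ.cov]
  ring

variable [Fintype m]

lemma integrable_trace_add_transpose_sq_mul (hZ : IsMatrixNormal P Z R C) (S : Matrix m m ℝ) :
    Integrable (fun ω => trace ((Z ω + (Z ω)ᵀ) * (Z ω + (Z ω)ᵀ) * S)) P :=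
  integrable_finsetSum _ fun i _ => integrable_finsetSum _ fun k _ =>
    (integrable_finsetSum _ fun j _ => hZ.integrable_add_transpose_mul_apply i j k).mul_const _

lemma integral_trace_add_transpose_sq_mul (hZ : IsMatrixNormal P Z R C) (S : Matrix m m ℝ) :
    ∫ ω, trace ((Z ω + (Z ω)ᵀ) * (Z ω + (Z ω)ᵀ) * S) ∂P =
      trace ((R * C + C * R) * S) + C.trace * trace (R * S) + R.trace * trace (C * S) := by
  have hint := hZ.integrable_add_transpose_mul_apply
  have hexpect (i k : m) : ∫ ω, ((Z ω + (Z ω)ᵀ) * (Z ω + (Z ω)ᵀ)) i k ∂P =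
      (R * C + C * R + C.trace • R + R.trace • C) i k := by
    simp only [Matrix.mul_apply (M := Z _ + (Z _)ᵀ)]
    rw [integral_finsetSum _ fun j _ => hint i j k]
    simp_rw [hZ.integral_add_transpose_mul_apply]
    simp only [Finset.sum_add_distrib, ← Finset.mul_sum,
      ← Finset.sum_mul, Matrix.add_apply, Matrix.smul_apply, Matrix.mul_apply, Matrix.trace,
      Matrix.diag_apply, smul_eq_mul]
    ring
  have hint_sq (i k : m) : Integrable (fun ω => ((Z ω + (Z ω)ᵀ) * (Z ω + (Z ω)ᵀ)) i k) P :=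
    integrable_finsetSum _ fun j _ => hint i j k
  calc ∫ ω, trace ((Z ω + (Z ω)ᵀ) * (Z ω + (Z ω)ᵀ) * S) ∂P
      = ∫ ω, ∑ i, ∑ k, ((Z ω + (Z ω)ᵀ) * (Z ω + (Z ω)ᵀ)) i k * S k i ∂P := rfl
    _ = trace ((R * C + C * R + C.trace • R + R.trace • C) * S) := by
      rw [integral_finsetSum _ fun i _ =>
        integrable_finsetSum _ fun k _ => (hint_sq i k).mul_const _]
      simp only [integral_finsetSum _ fun k _ => (hint_sq _ k).mul_const _, integral_mul_const,
        hexpect]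
      rfl
    _ = _ := by
      simp only [Matrix.add_mul, Matrix.smul_mul, Matrix.trace_add, Matrix.trace_smul, smul_eq_mul]

end Square

end IsMatrixNormal

section TraceInequalities

open Matrix Unitary

variable {n : Type*} [Fintype n]

lemma sum_diag_sq_le_trace_transpose_mul_self (M : Matrix n n ℝ) :
    ∑ j, M j j ^ 2 ≤ trace (Mᵀ * M) := by
  simp only [trace, diag_apply, mul_apply, transpose_apply, ← sq]
  exact Finset.sum_le_sum fun j _ =>
    Finset.single_le_sum (f := fun i => M i j ^ 2) (fun i _ => sq_nonneg _) (Finset.mem_univ j)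

lemma sum_diag_pow_four_le_trace_gram_sq (M : Matrix n n ℝ) :
    ∑ j, M j j ^ 4 ≤ trace (Mᵀ * M * (Mᵀ * M)) := by
  have hgram (j : n) : M j j ^ 2 ≤ (Mᵀ * M) j j := by
    simp only [mul_apply, transpose_apply, ← sq]
    exact Finset.single_le_sum (f := fun i => M i j ^ 2) (fun i _ => sq_nonneg _)
      (Finset.mem_univ j)
  calc ∑ j, M j j ^ 4 = ∑ j, (M j j ^ 2) ^ 2 := by simp only [← pow_mul]
    _ ≤ ∑ j, (Mᵀ * M) j j ^ 2 :=
      Finset.sum_le_sum fun j _ => pow_le_pow_left₀ (sq_nonneg _) (hgram j) 2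
    _ ≤ trace ((Mᵀ * M)ᵀ * (Mᵀ * M)) := sum_diag_sq_le_trace_transpose_mul_self _
    _ = trace (Mᵀ * M * (Mᵀ * M)) := by rw [transpose_mul, transpose_transpose]

lemma trace_transpose_mul_self_sub_compression {p : Matrix n n ℝ} (hp : pᵀ = p)
    (hpp : p * p = p) (M : Matrix n n ℝ) :
    trace ((M - p * M * p)ᵀ * (M - p * M * p)) =
      trace (Mᵀ * M) - trace ((p * M * p)ᵀ * (p * M * p)) := by
  have hcross : trace (Mᵀ * (p * M * p)) = trace ((p * M * p)ᵀ * (p * M * p)) := by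
    calc trace (Mᵀ * (p * M * p)) = trace (Mᵀ * (p * M * (p * p))) := by rw [hpp]
      _ = trace (p * (Mᵀ * (p * M * p))) := by
        rw [← Matrix.mul_assoc (p * M), ← Matrix.mul_assoc Mᵀ, trace_mul_comm]
      _ = trace (p * (Mᵀ * (p * p * M * p))) := by rw [hpp]
      _ = trace ((p * M * p)ᵀ * (p * M * p)) := by
        simp only [transpose_mul, hp, Matrix.mul_assoc]
  have hcross' : trace ((p * M * p)ᵀ * M) = trace (Mᵀ * (p * M * p)) := by
    rw [← trace_transpose, transpose_mul, transpose_transpose]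
  rw [transpose_sub, Matrix.sub_mul, Matrix.mul_sub, Matrix.mul_sub]
  simp only [trace_sub, hcross', hcross]
  ring

section Conjugation

variable [DecidableEq n]

lemma trace_conjStarAlgAut (U : unitaryGroup n ℝ) (M : Matrix n n ℝ) :
    trace (conjStarAlgAut ℝ (Matrix n n ℝ) U M) = trace M := by
  rw [conjStarAlgAut_apply, trace_mul_cycle, Unitary.coe_star_mul_self, Matrix.one_mul]

lemma transpose_conjStarAlgAut (U : unitaryGroup n ℝ) (M : Matrix n n ℝ) :
    (conjStarAlgAut ℝ (Matrix n n ℝ) U M)ᵀ = conjStarAlgAut ℝ (Matrix n n ℝ) U Mᵀ := by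
  simpa only [star_eq_conjTranspose, conjTranspose_eq_transpose_of_trivial] using
    (map_star (conjStarAlgAut ℝ (Matrix n n ℝ) U) M).symm

lemma posSemidef_conjStarAlgAut (U : unitaryGroup n ℝ) {M : Matrix n n ℝ} (hM : M.PosSemidef) :
    (conjStarAlgAut ℝ (Matrix n n ℝ) U M).PosSemidef :=
  hM.mul_mul_conjTranspose_same (U : Matrix n n ℝ)

end Conjugation

lemma trace_mul_nonneg_of_posSemidef {A B : Matrix n n ℝ} (hA : A.PosSemidef) (hB : B.PosSemidef) :
    0 ≤ trace (A * B) := by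
  classical
  rw [← trace_conjStarAlgAut (star hA.isHermitian.eigenvectorUnitary), map_mul,
    hA.isHermitian.conjStarAlgAut_star_eigenvectorUnitary, trace]
  simp only [diag_apply, diagonal_mul]
  exact Finset.sum_nonneg fun j _ =>
    mul_nonneg (hA.eigenvalues_nonneg j) (posSemidef_conjStarAlgAut _ hB).diag_nonneg

lemma trace_mul_le_trace_mul_of_posSemidef_sub {A B S : Matrix n n ℝ} (hBA : (B - A).PosSemidef)
    (hS : S.PosSemidef) : trace (A * S) ≤ trace (B * S) := by
  have := trace_mul_nonneg_of_posSemidef hBA hS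
  rwa [Matrix.sub_mul, trace_sub, sub_nonneg] at this

end TraceInequalities

section SpectralTruncation

open Matrix Unitary

variable {n : Type*} [Fintype n] [DecidableEq n]

lemma eigenvalues_le_add_diag {T H E : Matrix n n ℝ} {c : ℝ} (hT : T.IsHermitian)
    (hTHE : T = H + E) (hH : (c • 1 - H).PosSemidef) (a : n) :
    hT.eigenvalues a ≤
      c + conjStarAlgAut ℝ (Matrix n n ℝ) (star hT.eigenvectorUnitary) E a a := by
  set φ := conjStarAlgAut ℝ (Matrix n n ℝ) (star hT.eigenvectorUnitary)
  have hφT : φ H + φ E = diagonal hT.eigenvalues :=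
    ((map_add φ H E).symm.trans (congrArg φ hTHE.symm)).trans
      hT.conjStarAlgAut_star_eigenvectorUnitary
  have hdiag : φ H a a + φ E a a = hT.eigenvalues a := by
    rw [← Matrix.add_apply, hφT, diagonal_apply_eq]
  have hHa : 0 ≤ φ (c • 1 - H) a a := (posSemidef_conjStarAlgAut _ hH).diag_nonneg
  rw [map_sub, map_smul, map_one, Matrix.sub_apply, Matrix.smul_apply, one_apply_eq, smul_eq_mul,
    mul_one] at hHa
  linarith

-- `p` projects onto the eigenvectors of `T` with eigenvalue at most `2 * c`; an eigenvalue of `T`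
-- above `2 * c` is at most twice the corresponding diagonal entry of `E`.
lemma exists_spectral_truncation {T H E : Matrix n n ℝ} {c : ℝ} (hc : 0 ≤ c)
    (hT : T.PosSemidef) (hTHE : T = H + E) (hH : (c • 1 - H).PosSemidef) (hE : E.PosSemidef) :
    ∃ p : Matrix n n ℝ, pᵀ = p ∧ p * p = p ∧
      0 ≤ trace (p * T * p) ∧ trace (p * T * p) ≤ 2 * c * Fintype.card n ∧
      trace (p * T * p * (p * T * p)) ≤ (2 * c) ^ 2 * Fintype.card n ∧
      trace T - trace (p * T * p) ≤ 2 * trace E := by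
  set U := hT.isHermitian.eigenvectorUnitary
  set d := hT.isHermitian.eigenvalues
  have hd : ∀ a, 0 ≤ d a := hT.eigenvalues_nonneg
  set φ := conjStarAlgAut ℝ (Matrix n n ℝ) U
  have hTφ : T = φ (diagonal d) := hT.isHermitian.spectral_theorem
  set χ : n → ℝ := fun a => if d a ≤ 2 * c then 1 else 0
  have hχ_le {a : n} (ha : d a ≤ 2 * c) : χ a = 1 := if_pos ha
  have hχ_gt {a : n} (ha : ¬ d a ≤ 2 * c) : χ a = 0 := if_neg ha
  have hχ (a : n) : χ a * χ a = χ a := by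
    by_cases ha : d a ≤ 2 * c <;> simp [hχ_le, hχ_gt, ha]
  have hcompress : φ (diagonal χ) * T * φ (diagonal χ) = φ (diagonal fun a => χ a * d a) := by
    rw [hTφ, ← map_mul, ← map_mul, diagonal_mul_diagonal, diagonal_mul_diagonal]
    congr! 3 with a
    rw [mul_right_comm, hχ]
  have hχd (a : n) : 0 ≤ χ a * d a ∧ χ a * d a ≤ 2 * c := by
    by_cases ha : d a ≤ 2 * c <;> simp [hχ_le, hχ_gt, ha, hd a, hc]
  have htail (a : n) : d a - χ a * d a ≤ 2 * conjStarAlgAut ℝ (Matrix n n ℝ) (star U) E a a := by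
    have hEa : 0 ≤ conjStarAlgAut ℝ (Matrix n n ℝ) (star U) E a a :=
      (posSemidef_conjStarAlgAut _ hE).diag_nonneg
    by_cases ha : d a ≤ 2 * c
    · rw [hχ_le ha]; linarith
    · rw [hχ_gt ha]; linarith [eigenvalues_le_add_diag hT.isHermitian hTHE hH a]
  refine ⟨φ (diagonal χ), by rw [transpose_conjStarAlgAut, diagonal_transpose],
    by rw [← map_mul, diagonal_mul_diagonal]; simp only [hχ], ?_⟩
  have htraceE : trace E = ∑ a, conjStarAlgAut ℝ (Matrix n n ℝ) (star U) E a a :=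
    (trace_conjStarAlgAut (star U) E).symm
  rw [hcompress, ← map_mul, diagonal_mul_diagonal, htraceE, hTφ]
  simp only [φ, trace_conjStarAlgAut, trace_diagonal, Finset.mul_sum, ← Finset.sum_sub_distrib]
  refine ⟨Finset.sum_nonneg fun a _ => (hχd a).1, ?_, ?_, Finset.sum_le_sum fun a _ => htail a⟩
  · simpa [mul_comm] using Finset.sum_le_card_nsmul Finset.univ _ _ fun a _ => (hχd a).2
  · have hsq (a : n) : χ a * d a * (χ a * d a) ≤ (2 * c) ^ 2 := by nlinarith [hχd a]
    simpa [mul_comm] using Finset.sum_le_card_nsmul Finset.univ _ _ fun a _ => hsq a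

end SpectralTruncation

section EigenvalueLowerBound

open Matrix Unitary

-- By convexity `t ^ 4 ≥ 2 t² s - s²`. Capping `t ^ 4` at `Q ^ 2` matters only when
-- `t ^ 2 = (p + q) ^ 2` exceeds `Q`, and by AM-GM the excess is at most `p ^ 4 / Q + 2 * q ^ 2`.
lemma two_mul_sq_mul_sub_sq_le_min {p q s L Q : ℝ} (hs : 0 ≤ s) (hsL : s ≤ L) (hQ : 0 < Q) :
    2 * (p + q) ^ 2 * s - s ^ 2 - 2 * L * (p ^ 4 / Q + 2 * q ^ 2) ≤ min ((p + q) ^ 4) (Q ^ 2) := by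
  have hexcess : 0 ≤ p ^ 4 / Q + 2 * q ^ 2 := by positivity
  have hL : 0 ≤ L := hs.trans hsL
  have hamgm : 2 * p ^ 2 ≤ Q + p ^ 4 / Q := by
    rw [← sub_nonneg, show Q + p ^ 4 / Q - 2 * p ^ 2 = (Q - p ^ 2) ^ 2 / Q by field_simp; ring]
    positivity
  have hsplit : (p + q) ^ 2 ≤ Q + (p ^ 4 / Q + 2 * q ^ 2) := by nlinarith [sq_nonneg (p - q)]
  refine le_min ?_ ?_
  · nlinarith [sq_nonneg ((p + q) ^ 2 - s), mul_nonneg hL hexcess]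
  · nlinarith [sq_nonneg (Q - s), mul_le_mul_of_nonneg_right hsplit hs,
      mul_le_mul_of_nonneg_right hsL hexcess]

variable {n : Type*} [Fintype n] [DecidableEq n]

lemma two_mul_trace_sq_mul_sub_le_sum_min_diagonal {l : n → ℝ} {M₁ M₂ S : Matrix n n ℝ} {L Q : ℝ}
    (hl : ∀ j, l j = 2 * M₁ j j + 2 * M₂ j j) (hL : 0 ≤ L) (hS : S.PosSemidef)
    (hSL : (L • 1 - S).PosSemidef) (hQ : 0 < Q) :
    2 * trace (diagonal l * diagonal l * S) - trace (S * S) -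
      2 * L * (16 / Q * trace (M₁ᵀ * M₁ * (M₁ᵀ * M₁)) + 8 * trace (M₂ᵀ * M₂)) ≤
        ∑ j, min (l j ^ 4) (Q ^ 2) := by
  have hS_le (j : n) : S j j ≤ L := by
    simpa using (hSL.diag_nonneg : 0 ≤ (L • 1 - S) j j)
  have htrace : trace (diagonal l * diagonal l * S) = ∑ j, l j ^ 2 * S j j := by
    simp only [diagonal_mul_diagonal, trace, diag_apply, diagonal_mul, sq]
  have hSS : ∑ j, S j j ^ 2 ≤ trace (S * S) := by
    simpa only [← conjTranspose_eq_transpose_of_trivial, hS.isHermitian.eq] using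
      sum_diag_sq_le_trace_transpose_mul_self S
  have hexcess : ∑ j, ((2 * M₁ j j) ^ 4 / Q + 2 * (2 * M₂ j j) ^ 2) ≤
      16 / Q * trace (M₁ᵀ * M₁ * (M₁ᵀ * M₁)) + 8 * trace (M₂ᵀ * M₂) := by
    calc ∑ j, ((2 * M₁ j j) ^ 4 / Q + 2 * (2 * M₂ j j) ^ 2)
        = 16 / Q * ∑ j, M₁ j j ^ 4 + 8 * ∑ j, M₂ j j ^ 2 := by
          rw [Finset.mul_sum, Finset.mul_sum, ← Finset.sum_add_distrib]
          exact Finset.sum_congr rfl fun j _ => by ring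
      _ ≤ _ := by
          gcongr
          exacts [sum_diag_pow_four_le_trace_gram_sq M₁, sum_diag_sq_le_trace_transpose_mul_self M₂]
  calc _ ≤ 2 * ∑ j, l j ^ 2 * S j j - ∑ j, S j j ^ 2 -
        2 * L * ∑ j, ((2 * M₁ j j) ^ 4 / Q + 2 * (2 * M₂ j j) ^ 2) := by
        rw [htrace]
        gcongr
    _ = ∑ j, (2 * (2 * M₁ j j + 2 * M₂ j j) ^ 2 * S j j - S j j ^ 2 -
        2 * L * ((2 * M₁ j j) ^ 4 / Q + 2 * (2 * M₂ j j) ^ 2)) := by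
        simp only [hl, Finset.mul_sum, Finset.sum_sub_distrib, mul_assoc]
    _ ≤ ∑ j, min (l j ^ 4) (Q ^ 2) := Finset.sum_le_sum fun j _ => by
        rw [hl]
        exact two_mul_sq_mul_sub_sq_le_min hS.diag_nonneg (hS_le j) hQ

theorem two_mul_trace_sq_mul_sub_le_sum_min_eigenvalues {A M₁ M₂ S : Matrix n n ℝ} {L Q : ℝ}
    (hA : A.IsHermitian) (hAM : A = (M₁ + M₂) + (M₁ + M₂)ᵀ) (hL : 0 ≤ L) (hS : S.PosSemidef)
    (hSL : (L • 1 - S).PosSemidef) (hQ : 0 < Q) :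
    2 * trace (A * A * S) - trace (S * S) -
      2 * L * (16 / Q * trace (M₁ᵀ * M₁ * (M₁ᵀ * M₁)) + 8 * trace (M₂ᵀ * M₂)) ≤
        ∑ j, min (hA.eigenvalues j ^ 4) (Q ^ 2) := by
  set φ := conjStarAlgAut ℝ (Matrix n n ℝ) (star hA.eigenvectorUnitary) with hφ
  have hφA : φ A = diagonal hA.eigenvalues := hA.conjStarAlgAut_star_eigenvectorUnitary
  have hl (j : n) : hA.eigenvalues j = 2 * φ M₁ j j + 2 * φ M₂ j j := by
    have hφAM : φ A = (φ M₁ + φ M₂) + (φ M₁ + φ M₂)ᵀ := by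
      conv_lhs => rw [hAM]
      rw [map_add, hφ, ← transpose_conjStarAlgAut, map_add]
    rw [← diagonal_apply_eq hA.eigenvalues j, ← hφA, hφAM]
    simp only [Matrix.add_apply, transpose_apply]
    ring
  have hφSL : (L • 1 - φ S).PosSemidef := by
    simpa only [map_sub, map_smul, map_one] using
      posSemidef_conjStarAlgAut (star hA.eigenvectorUnitary) hSL
  have hdiagonal := two_mul_trace_sq_mul_sub_le_sum_min_diagonal hl hL
    (posSemidef_conjStarAlgAut _ hS) hφSL hQ
  rw [← hφA] at hdiagonal
  simpa only [hφ, transpose_conjStarAlgAut, ← map_mul, trace_conjStarAlgAut] using hdiagonal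

end EigenvalueLowerBound

section Truncation

variable {α : Type*} [MeasurableSpace α] {μ : Measure α} {w : α → ℝ}

lemma tendsto_min_natCast (a : ℝ) : Tendsto (fun n : ℕ => min a n) atTop (nhds a) :=
  tendsto_const_nhds.congr' <| (eventually_ge_atTop ⌈a⌉₊).mono fun _ hn =>
    (min_eq_left (Nat.ceil_le.mp hn)).symm

lemma integrable_min_natCast (hw : Integrable w μ) (hw0 : ∀ x, 0 ≤ w x) (n : ℕ) :
    Integrable (fun x => min (w x) n) μ :=
  hw.mono (hw.aestronglyMeasurable.inf aestronglyMeasurable_const) <| .of_forall fun x => by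
    rw [norm_of_nonneg (le_min (hw0 x) n.cast_nonneg), norm_of_nonneg (hw0 x)]
    exact min_le_left _ _

lemma tendsto_integral_sub_min_natCast (hw : Integrable w μ) (hw0 : ∀ x, 0 ≤ w x) :
    Tendsto (fun n : ℕ => ∫ x, (w x - min (w x) n) ∂μ) atTop (nhds 0) := by
  rw [← integral_zero α ℝ (μ := μ)]
  refine tendsto_integral_of_dominated_convergence w
    (fun n => (hw.sub (integrable_min_natCast hw hw0 n)).aestronglyMeasurable) hw
    (fun n => .of_forall fun x => ?_) (.of_forall fun x => ?_)
  · rw [norm_of_nonneg (sub_nonneg.mpr (min_le_left _ _))]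
    exact sub_le_self _ (le_min (hw0 x) n.cast_nonneg)
  · simpa only [sub_self] using (tendsto_min_natCast (w x)).const_sub (w x)

lemma exists_le_integral_min_natCast_sq (hw : Integrable w μ) (hw0 : ∀ x, 0 ≤ w x)
    (hsq : ¬ Integrable (fun x => w x ^ 2) μ) (C : ℝ) :
    ∃ n : ℕ, C ≤ ∫ x, min (w x) n ^ 2 ∂μ := by
  by_contra! hC
  have hmin (n : ℕ) (x : α) : 0 ≤ min (w x) n := le_min (hw0 x) n.cast_nonneg
  have hmeas (n : ℕ) : AEStronglyMeasurable (fun x => min (w x) n ^ 2) μ :=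
    (integrable_min_natCast hw hw0 n).aestronglyMeasurable.pow 2
  have hint (n : ℕ) : Integrable (fun x => min (w x) n ^ 2) μ :=
    (hw.const_mul (n : ℝ)).mono (hmeas n) <| .of_forall fun x => by
      rw [norm_of_nonneg (sq_nonneg _), norm_of_nonneg (mul_nonneg n.cast_nonneg (hw0 x)), sq]
      exact mul_le_mul (min_le_right _ _) (min_le_left _ _) (hmin n x) n.cast_nonneg
  have hbound (n : ℕ) : ∫⁻ x, ENNReal.ofReal (min (w x) n ^ 2) ∂μ ≤ ENNReal.ofReal C := by
    rw [← ofReal_integral_eq_lintegral_ofReal (hint n) (.of_forall fun x => sq_nonneg _)]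
    exact ENNReal.ofReal_le_ofReal (hC n).le
  have hliminf : ∫⁻ x, ENNReal.ofReal (w x ^ 2) ∂μ ≤ ENNReal.ofReal C := by
    calc ∫⁻ x, ENNReal.ofReal (w x ^ 2) ∂μ
        = ∫⁻ x, liminf (fun n : ℕ => ENNReal.ofReal (min (w x) n ^ 2)) atTop ∂μ :=
          lintegral_congr fun x =>
            (ENNReal.tendsto_ofReal ((tendsto_min_natCast (w x)).pow 2)).liminf_eq.symm
      _ ≤ liminf (fun n : ℕ => ∫⁻ x, ENNReal.ofReal (min (w x) n ^ 2) ∂μ) atTop :=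
          lintegral_liminf_le' fun n => (hmeas n).aemeasurable.ennreal_ofReal
      _ ≤ ENNReal.ofReal C :=
          (liminf_le_liminf (.of_forall hbound)).trans_eq (liminf_const _)
  refine hsq ⟨hw.aestronglyMeasurable.pow 2, ?_⟩
  rw [hasFiniteIntegral_iff_ofReal (.of_forall fun x => sq_nonneg _)]
  exact hliminf.trans_lt ENNReal.ofReal_lt_top

end Truncation

section CosineCoefficients

/-- The `k`-th cosine coefficient `∫ cos (k x) w x dx` of `w` over `(-π, π]`, without
normalization. For even `w` it is the Fourier coefficient `∫ e^{ikx} w x dx`. -/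
def cosCoeff (w : ℝ → ℝ) (k : ℤ) : ℝ :=
  ∫ x in Set.Ioc (-π) π, cos (k * x) * w x

variable {w w' : ℝ → ℝ}

lemma integrableOn_cos_mul (hw : IntegrableOn w (Set.Ioc (-π) π)) (k : ℤ) :
    IntegrableOn (fun x => cos (k * x) * w x) (Set.Ioc (-π) π) :=
  hw.bdd_mul (c := 1) (by fun_prop) (.of_forall fun x => abs_cos_le_one _)

lemma integrableOn_sin_mul (hw : IntegrableOn w (Set.Ioc (-π) π)) (k : ℤ) :
    IntegrableOn (fun x => sin (k * x) * w x) (Set.Ioc (-π) π) :=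
  hw.bdd_mul (c := 1) (by fun_prop) (.of_forall fun x => abs_sin_le_one _)

lemma cosCoeff_neg (w : ℝ → ℝ) (k : ℤ) : cosCoeff w (-k) = cosCoeff w k := by
  simp only [cosCoeff, Int.cast_neg, neg_mul, cos_neg]

lemma cosCoeff_zero_right (w : ℝ → ℝ) : cosCoeff w 0 = ∫ x in Set.Ioc (-π) π, w x := by
  simp only [cosCoeff, Int.cast_zero, zero_mul, cos_zero, one_mul]

lemma cosCoeff_zero_nonneg (hw0 : ∀ x, 0 ≤ w x) : 0 ≤ cosCoeff w 0 :=
  cosCoeff_zero_right w ▸ integral_nonneg hw0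

lemma cosCoeff_sub (hw : IntegrableOn w (Set.Ioc (-π) π))
    (hw' : IntegrableOn w' (Set.Ioc (-π) π)) (k : ℤ) :
    cosCoeff (fun x => w x - w' x) k = cosCoeff w k - cosCoeff w' k := by
  simp only [cosCoeff, mul_sub]
  exact integral_sub (integrableOn_cos_mul hw k) (integrableOn_cos_mul hw' k)

lemma cosCoeff_const (c : ℝ) (k : ℤ) :
    cosCoeff (fun _ => c) k = if k = 0 then 2 * π * c else 0 := by
  rw [cosCoeff, integral_mul_const, ← intervalIntegral.integral_of_le (by linarith [pi_pos])]
  split_ifs with hk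
  · subst hk
    simp only [Int.cast_zero, zero_mul, cos_zero, intervalIntegral.integral_const, smul_eq_mul]
    ring
  · have hk' : (k : ℝ) ≠ 0 := Int.cast_ne_zero.mpr hk
    simp [intervalIntegral.integral_comp_mul_left (fun x => cos x) hk', sin_int_mul_pi]

lemma integral_sin_mul_of_even (hw : ∀ x, w (-x) = w x) (k : ℤ) :
    ∫ x in Set.Ioc (-π) π, sin (k * x) * w x = 0 := by
  rw [← intervalIntegral.integral_of_le (by linarith [pi_pos])]
  have h := intervalIntegral.integral_comp_neg (a := -π) (b := π) fun x => sin (k * x) * w x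
  simp only [mul_neg, sin_neg, hw, neg_mul, intervalIntegral.integral_neg, neg_neg] at h
  linarith

lemma integral_exp_mul_of_even (hw : IntegrableOn w (Set.Ioc (-π) π)) (heven : ∀ x, w (-x) = w x)
    (k : ℤ) :
    ∫ x in Set.Ioc (-π) π, Complex.exp (Complex.I * ((k * x : ℝ) : ℂ)) * (w x : ℂ) =
      cosCoeff w k := by
  have heuler (x : ℝ) : Complex.exp (Complex.I * ((k * x : ℝ) : ℂ)) * (w x : ℂ) =
      ((cos (k * x) * w x : ℝ) : ℂ) + ((sin (k * x) * w x : ℝ) : ℂ) * Complex.I := by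
    rw [mul_comm Complex.I, Complex.exp_mul_I, ← Complex.ofReal_cos, ← Complex.ofReal_sin]
    push_cast
    ring
  simp_rw [heuler]
  rw [integral_add (integrableOn_cos_mul hw k).ofReal
      ((integrableOn_sin_mul hw k).ofReal.mul_const _), integral_mul_const,
    integral_complex_ofReal, integral_complex_ofReal, integral_sin_mul_of_even heven,
    Complex.ofReal_zero, zero_mul, add_zero, cosCoeff]

theorem hasSum_cosCoeff_sq (hw : MemLp w 2 (volume.restrict (Set.Ioc (-π) π)))
    (heven : ∀ x, w (-x) = w x) :
    HasSum (fun k => cosCoeff w k ^ 2) (2 * π * ∫ x in Set.Ioc (-π) π, w x ^ 2) := by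
  have hπ : -π < π := by linarith [pi_pos]
  have hcoeff (k : ℤ) :
      ‖fourierCoeffOn hπ (fun x => (w x : ℂ)) k‖ ^ 2 = (2 * π)⁻¹ ^ 2 * cosCoeff w k ^ 2 := by
    have hexp (x : ℝ) : fourier (-k) (x : AddCircle (π - -π)) • (w x : ℂ) =
        Complex.exp (Complex.I * (((-k : ℤ) * x : ℝ) : ℂ)) * (w x : ℂ) := by
      rw [fourier_coe_apply, smul_eq_mul]
      congr 2
      push_cast
      field_simp
      ring
    rw [fourierCoeffOn_eq_integral, intervalIntegral.integral_of_le hπ.le]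
    simp_rw [hexp]
    rw [integral_exp_mul_of_even (hw.integrable one_le_two) heven, cosCoeff_neg, norm_smul,
      Complex.norm_real, mul_pow, norm_eq_abs, norm_eq_abs, sq_abs, sq_abs]
    ring
  have hparseval := hasSum_sq_fourierCoeffOn (f := fun x => (w x : ℂ)) hπ hw.ofReal
  simp only [hcoeff, Complex.norm_real, norm_eq_abs, sq_abs,
    intervalIntegral.integral_of_le hπ.le, smul_eq_mul] at hparseval
  have hscale : (2 * π) ^ 2 * ((π - -π)⁻¹ * ∫ x in Set.Ioc (-π) π, w x ^ 2) =
      2 * π * ∫ x in Set.Ioc (-π) π, w x ^ 2 := by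
    field_simp
    ring
  rw [← hscale]
  refine (hparseval.mul_left ((2 * π) ^ 2)).congr_fun fun k => ?_
  field_simp

end CosineCoefficients

section Toeplitz

open Matrix

/-- The `N × N` Toeplitz matrix with symbol `w`, normalized so that the entries are the cosine
coefficients of `w` without the factor `(2π)⁻¹`. -/
def toeplitz (w : ℝ → ℝ) (N : ℕ) : Matrix (Fin N) (Fin N) ℝ :=
  of fun i j => cosCoeff w ((i : ℕ) - (j : ℕ) : ℤ)

variable {w w' : ℝ → ℝ} {N : ℕ}

lemma toeplitz_apply (w : ℝ → ℝ) (i j : Fin N) :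
    toeplitz w N i j = cosCoeff w ((i : ℕ) - (j : ℕ) : ℤ) := rfl

lemma transpose_toeplitz (w : ℝ → ℝ) (N : ℕ) : (toeplitz w N)ᵀ = toeplitz w N := by
  ext i j
  rw [transpose_apply, toeplitz_apply, toeplitz_apply, ← cosCoeff_neg, neg_sub]

lemma trace_toeplitz (w : ℝ → ℝ) (N : ℕ) : trace (toeplitz w N) = N * cosCoeff w 0 := by
  simp only [trace, diag_apply, toeplitz_apply, sub_self, Finset.sum_const, Finset.card_univ,
    Fintype.card_fin, nsmul_eq_mul]

lemma toeplitz_sub (hw : IntegrableOn w (Set.Ioc (-π) π))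
    (hw' : IntegrableOn w' (Set.Ioc (-π) π)) (N : ℕ) :
    toeplitz (fun x => w x - w' x) N = toeplitz w N - toeplitz w' N := by
  ext i j
  simp only [Matrix.sub_apply, toeplitz_apply, cosCoeff_sub hw hw']

lemma toeplitz_const (c : ℝ) (N : ℕ) : toeplitz (fun _ => c) N = (2 * π * c) • 1 := by
  ext i j
  simp only [toeplitz_apply, cosCoeff_const, sub_eq_zero, Nat.cast_inj, Fin.val_inj,
    Matrix.smul_apply, Matrix.one_apply, smul_eq_mul, mul_ite, mul_one, mul_zero]

lemma sum_mul_mul_cos_sub_mul (v : Fin N → ℝ) (x : ℝ) :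
    ∑ i, ∑ j, v i * v j * cos (((i : ℕ) - (j : ℕ) : ℤ) * x) =
      (∑ i, v i * cos ((i : ℕ) * x)) ^ 2 + (∑ i, v i * sin ((i : ℕ) * x)) ^ 2 := by
  simp only [sq, Finset.sum_mul_sum, ← Finset.sum_add_distrib, Int.cast_sub, Int.cast_natCast,
    sub_mul, cos_sub]
  exact Finset.sum_congr rfl fun i _ => Finset.sum_congr rfl fun j _ => by ring

lemma dotProduct_toeplitz_mulVec (hw : IntegrableOn w (Set.Ioc (-π) π)) (v : Fin N → ℝ) :
    v ⬝ᵥ toeplitz w N *ᵥ v = ∫ x in Set.Ioc (-π) π,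
      ((∑ i, v i * cos ((i : ℕ) * x)) ^ 2 + (∑ i, v i * sin ((i : ℕ) * x)) ^ 2) * w x := by
  have hint (i j : Fin N) : IntegrableOn
      (fun x => v i * v j * (cos (((i : ℕ) - (j : ℕ) : ℤ) * x) * w x)) (Set.Ioc (-π) π) :=
    (integrableOn_cos_mul hw _).const_mul _
  simp only [← sum_mul_mul_cos_sub_mul, Finset.sum_mul, mul_assoc (v _ * v _)]
  rw [integral_finsetSum _ fun i _ => integrable_finsetSum _ fun j _ => hint i j]
  simp only [dotProduct, mulVec, Finset.mul_sum]
  refine Finset.sum_congr rfl fun i _ => ?_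
  rw [integral_finsetSum _ fun j _ => hint i j]
  refine Finset.sum_congr rfl fun j _ => ?_
  rw [integral_const_mul, toeplitz_apply, cosCoeff]
  ring

lemma posSemidef_toeplitz (hw : IntegrableOn w (Set.Ioc (-π) π)) (hw0 : ∀ x, 0 ≤ w x) (N : ℕ) :
    (toeplitz w N).PosSemidef := by
  refine .of_dotProduct_mulVec_nonneg ?_ fun v => ?_
  · rw [IsHermitian, conjTranspose_eq_transpose_of_trivial, transpose_toeplitz]
  · rw [star_trivial, dotProduct_toeplitz_mulVec hw]
    exact integral_nonneg fun x => mul_nonneg (by positivity) (hw0 x)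

lemma posSemidef_toeplitz_sub (hw : IntegrableOn w (Set.Ioc (-π) π))
    (hw' : IntegrableOn w' (Set.Ioc (-π) π)) (hle : ∀ x, w' x ≤ w x) (N : ℕ) :
    (toeplitz w N - toeplitz w' N).PosSemidef :=
  toeplitz_sub hw hw' N ▸
    posSemidef_toeplitz (hw.sub hw') (fun x => sub_nonneg.mpr (hle x)) N

lemma posSemidef_smul_one_sub_toeplitz {c : ℝ} (hw : IntegrableOn w (Set.Ioc (-π) π))
    (hle : ∀ x, w x ≤ c) (N : ℕ) : ((2 * π * c) • 1 - toeplitz w N).PosSemidef :=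
  toeplitz_const c N ▸ posSemidef_toeplitz_sub (integrableOn_const (by simp)) hw hle N

lemma trace_toeplitz_mul_self_le (hw : IntegrableOn w (Set.Ioc (-π) π))
    (hw' : IntegrableOn w' (Set.Ioc (-π) π)) (hw'0 : ∀ x, 0 ≤ w' x) (hle : ∀ x, w' x ≤ w x)
    (N : ℕ) : trace (toeplitz w' N * toeplitz w' N) ≤ trace (toeplitz w N * toeplitz w' N) :=
  trace_mul_le_trace_mul_of_posSemidef_sub (posSemidef_toeplitz_sub hw hw' hle N)
    (posSemidef_toeplitz hw' hw'0 N)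

-- With `S = (2 * cosCoeff w 0) • toeplitz w' N`, the right-hand side bounds `E[tr ((Z + Zᵀ)² S)]`
-- from below, so that `E[2 tr ((Z + Zᵀ)² S) - tr (S²)]` is at least `tr (S²)`.
lemma trace_smul_toeplitz_mul_self_le (hw : IntegrableOn w (Set.Ioc (-π) π))
    (hw' : IntegrableOn w' (Set.Ioc (-π) π)) (hw'0 : ∀ x, 0 ≤ w' x) (hle : ∀ x, w' x ≤ w x)
    (hN : N ≠ 0) :
    trace (((2 * cosCoeff w 0) • toeplitz w' N) * ((2 * cosCoeff w 0) • toeplitz w' N)) ≤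
      2 * (N : ℝ)⁻¹ * trace (toeplitz w N) *
        trace (toeplitz w N * (2 * cosCoeff w 0) • toeplitz w' N) := by
  have hr : 0 ≤ cosCoeff w 0 := cosCoeff_zero_nonneg fun x => (hw'0 x).trans (hle x)
  simp only [Matrix.smul_mul, Matrix.mul_smul, trace_smul, smul_eq_mul, trace_toeplitz]
  calc 2 * cosCoeff w 0 * (2 * cosCoeff w 0 * trace (toeplitz w' N * toeplitz w' N))
      ≤ 2 * cosCoeff w 0 * (2 * cosCoeff w 0 * trace (toeplitz w N * toeplitz w' N)) := by
        gcongr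
        exact trace_toeplitz_mul_self_le hw hw' hw'0 hle N
    _ = _ := by
        rw [mul_assoc 2 (N : ℝ)⁻¹, inv_mul_cancel_left₀ (Nat.cast_ne_zero.mpr hN)]

lemma sum_Icc_le_sum_range_sub {a : ℤ → ℝ} (ha : ∀ k, 0 ≤ a k) {i m : ℕ}
    (hi : i ∈ Finset.Ico m (N - m)) :
    ∑ k ∈ Finset.Icc (-m : ℤ) m, a k ≤ ∑ j ∈ Finset.range N, a (i - j) := by
  have hinj : Set.InjOn (fun j : ℕ => (i - j : ℤ)) (Finset.range N) := fun j _ j' _ h => by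
    simpa using h
  rw [← Finset.sum_image hinj]
  refine Finset.sum_le_sum_of_subset_of_nonneg (fun k hk => ?_) fun k _ _ => ha k
  rw [Finset.mem_Icc] at hk
  rw [Finset.mem_Ico] at hi
  exact Finset.mem_image.mpr ⟨(i - k).toNat, Finset.mem_range.mpr (by omega), by omega⟩

lemma sub_mul_sum_Icc_le_sum_sum_sub {a : ℤ → ℝ} (ha : ∀ k, 0 ≤ a k) (m N : ℕ) :
    (N - 2 * m : ℝ) * ∑ k ∈ Finset.Icc (-m : ℤ) m, a k ≤
      ∑ i : Fin N, ∑ j : Fin N, a ((i : ℕ) - (j : ℕ)) := by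
  have hcard : (N - 2 * m : ℝ) ≤ (Finset.Ico m (N - m)).card := by
    rw [Nat.card_Ico, sub_le_iff_le_add]
    exact_mod_cast (by omega : N ≤ N - m - m + 2 * m)
  rw [Fin.sum_univ_eq_sum_range (fun i : ℕ => ∑ j : Fin N, a ((i : ℤ) - (j : ℕ))) N]
  simp only [fun i : ℕ => Fin.sum_univ_eq_sum_range (fun j => a ((i : ℤ) - j)) N]
  calc (N - 2 * m : ℝ) * ∑ k ∈ Finset.Icc (-m : ℤ) m, a k
      ≤ (Finset.Ico m (N - m)).card • ∑ k ∈ Finset.Icc (-m : ℤ) m, a k := by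
        rw [nsmul_eq_mul]
        exact mul_le_mul_of_nonneg_right hcard (Finset.sum_nonneg fun k _ => ha k)
    _ ≤ ∑ i ∈ Finset.Ico m (N - m), ∑ j ∈ Finset.range N, a (i - j) :=
        Finset.card_nsmul_le_sum _ _ _ fun i hi => sum_Icc_le_sum_range_sub ha hi
    _ ≤ ∑ i ∈ Finset.range N, ∑ j ∈ Finset.range N, a (i - j) :=
        Finset.sum_le_sum_of_subset_of_nonneg
          (fun i hi => Finset.mem_range.mpr (by rw [Finset.mem_Ico] at hi; omega))
          fun i _ _ => Finset.sum_nonneg fun j _ => ha _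

theorem eventually_mul_le_trace_toeplitz_sq
    (hw : MemLp w 2 (volume.restrict (Set.Ioc (-π) π))) (heven : ∀ x, w (-x) = w x) {c : ℝ}
    (hc : c < 2 * π * ∫ x in Set.Ioc (-π) π, w x ^ 2) :
    ∀ᶠ N : ℕ in atTop, N * c ≤ trace (toeplitz w N * toeplitz w N) := by
  have htrace (N : ℕ) : trace (toeplitz w N * toeplitz w N) =
      ∑ i : Fin N, ∑ j : Fin N, cosCoeff w ((i : ℕ) - (j : ℕ)) ^ 2 := by
    nth_rw 2 [← transpose_toeplitz]
    simp only [trace, diag_apply, mul_apply, transpose_apply, toeplitz_apply, ← sq]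
  obtain ⟨s, hs⟩ := ((hasSum_cosCoeff_sq hw heven).eventually (lt_mem_nhds hc)).exists
  obtain ⟨m, hm⟩ : ∃ m : ℕ, s ⊆ Finset.Icc (-m : ℤ) m := by
    refine ⟨s.sup Int.natAbs, fun k hk => Finset.mem_Icc.mpr ?_⟩
    have := Finset.le_sup (f := Int.natAbs) hk
    omega
  set σ := ∑ k ∈ Finset.Icc (-m : ℤ) m, cosCoeff w k ^ 2
  have hσ : c < σ :=
    hs.trans_le (Finset.sum_le_sum_of_subset_of_nonneg hm fun k _ _ => sq_nonneg _)
  filter_upwards [eventually_ge_atTop ⌈2 * m * σ / (σ - c)⌉₊] with N hN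
  have hN' : 2 * m * σ ≤ N * (σ - c) := (div_le_iff₀ (sub_pos.mpr hσ)).mp (Nat.ceil_le.mp hN)
  calc N * c ≤ (N - 2 * m) * σ := by linarith
    _ ≤ trace (toeplitz w N * toeplitz w N) :=
      htrace N ▸ sub_mul_sum_Icc_le_sum_sum_sub (fun k => sq_nonneg _) m N

end Toeplitz

section SpectralDensity

/-- The block `(X_{i,j})`, `1 ≤ i, j ≤ N`, of the random field `X`. -/
def fieldMatrix {Ω : Type*} (X : ℤ → ℤ → Ω → ℝ) (N : ℕ) (ω : Ω) : Matrix (Fin N) (Fin N) ℝ :=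
  Matrix.of fun i j => X ((i : ℕ) + 1) ((j : ℕ) + 1) ω

lemma scaledW_eq_add_transpose {Ω : Type*} (X : ℤ → ℤ → Ω → ℝ) (N : ℕ) (ω : Ω) :
    scaledW X N ω = (√N)⁻¹ • fieldMatrix X N ω + ((√N)⁻¹ • fieldMatrix X N ω).transpose := by
  ext i j
  simp only [scaledW, fieldMatrix, Matrix.add_apply, Matrix.transpose_apply, Matrix.smul_apply,
    Matrix.of_apply, smul_eq_mul, mul_add]

variable {Ω : Type*} [MeasurableSpace Ω] {P : Measure Ω} {X : ℤ → ℤ → Ω → ℝ} {w : ℝ → ℝ}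

lemma integral_mul_eq_cosCoeff_mul_cosCoeff (hX : StatGauss P X)
    (hw : IntegrableOn w (Set.Ioc (-π) π)) (heven : ∀ x, w (-x) = w x)
    (hspec : HasSpecDensity P X fun q => w q.1 * w q.2) (j k j' k' : ℤ) :
    ∫ ω, X j k ω * X j' k' ω ∂P = cosCoeff w (j - j') * cosCoeff w (k - k') := by
  have hprod (u v : ℤ) : ∫ ω, X 0 0 ω * X u v ω ∂P = cosCoeff w u * cosCoeff w v := by
    have hfubini := setIntegral_prod_mul (μ := (volume : Measure ℝ)) (ν := (volume : Measure ℝ))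
      (fun x : ℝ => Complex.exp (Complex.I * ((u * x : ℝ) : ℂ)) * (w x : ℂ))
      (fun x : ℝ => Complex.exp (Complex.I * ((v * x : ℝ) : ℂ)) * (w x : ℂ))
      (Set.Ioc (-π) π) (Set.Ioc (-π) π)
    rw [integral_exp_mul_of_even hw heven, integral_exp_mul_of_even hw heven] at hfubini
    have hsplit (q : ℝ × ℝ) :
        Complex.exp (Complex.I * ((u * q.1 + v * q.2 : ℝ) : ℂ)) * ((w q.1 * w q.2 : ℝ) : ℂ) =
          Complex.exp (Complex.I * ((u * q.1 : ℝ) : ℂ)) * (w q.1 : ℂ) *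
            (Complex.exp (Complex.I * ((v * q.2 : ℝ) : ℂ)) * (w q.2 : ℂ)) := by
      rw [Complex.ofReal_add, mul_add, Complex.exp_add, Complex.ofReal_mul (w q.1)]
      ring
    have hdensity := hspec u v
    simp only [hsplit, specBox, Measure.volume_eq_prod, hfubini] at hdensity
    exact_mod_cast hdensity.symm
  have hshift := hX.stat j k (j' - j) (k' - k)
  rw [add_sub_cancel, add_sub_cancel, hprod] at hshift
  rw [hshift, ← cosCoeff_neg, ← cosCoeff_neg w (k' - k), neg_sub, neg_sub]

lemma isMatrixNormal_fieldMatrix (hX : StatGauss P X) (hw : IntegrableOn w (Set.Ioc (-π) π))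
    (heven : ∀ x, w (-x) = w x) (hspec : HasSpecDensity P X fun q => w q.1 * w q.2) (N : ℕ) :
    IsMatrixNormal P (fieldMatrix X N) (toeplitz w N) (toeplitz w N) where
  gaussian := ⟨_, hX.isCenteredGaussianSpace_span, fun i j =>
    Submodule.subset_span ⟨((i : ℕ) + 1, (j : ℕ) + 1), rfl⟩⟩
  cov i j k l := by
    simp only [fieldMatrix, Matrix.of_apply,
      integral_mul_eq_cosCoeff_mul_cosCoeff hX hw heven hspec, add_sub_add_right_eq_sub,
      toeplitz_apply]

lemma isMatrixNormal_inv_sqrt_smul_fieldMatrix (hX : StatGauss P X)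
    (hw : IntegrableOn w (Set.Ioc (-π) π)) (heven : ∀ x, w (-x) = w x)
    (hspec : HasSpecDensity P X fun q => w q.1 * w q.2) (N : ℕ) :
    IsMatrixNormal P (fun ω => (√N)⁻¹ • fieldMatrix X N ω) ((N : ℝ)⁻¹ • toeplitz w N)
      (toeplitz w N) := by
  simpa only [inv_pow, sq_sqrt N.cast_nonneg] using
    (isMatrixNormal_fieldMatrix hX hw heven hspec N).smul (√N)⁻¹

end SpectralDensity

namespace IsMatrixNormal

open Matrix

variable {Ω n : Type*} [MeasurableSpace Ω] {P : Measure Ω} [IsProbabilityMeasure P] [Fintype n]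
  {Z : Ω → Matrix n n ℝ} {T p : Matrix n n ℝ} {a : ℝ}

lemma compression (hZ : IsMatrixNormal P Z (a • T) T) (hp : pᵀ = p) :
    IsMatrixNormal P (fun ω => p * Z ω * p) (a • (p * T * p)) (p * T * p) := by
  simpa only [hp, Matrix.mul_smul, Matrix.smul_mul] using (hZ.mul_left p).mul_right p

lemma integral_trace_gram_sq_smul_le {κ : ℝ}
    (hZ : IsMatrixNormal P Z ((Fintype.card n : ℝ)⁻¹ • T) T)
    (hT : Tᵀ = T) (hT0 : 0 ≤ trace T) (hTκ : trace T ≤ κ * Fintype.card n)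
    (hTTκ : trace (T * T) ≤ κ ^ 2 * Fintype.card n) :
    ∫ ω, trace ((Z ω)ᵀ * Z ω * ((Z ω)ᵀ * Z ω)) ∂P ≤ 3 * κ ^ 4 * Fintype.card n := by
  rcases isEmpty_or_nonempty n with hn | hn
  · simp [Matrix.trace]
  set N : ℝ := (Fintype.card n : ℝ)
  have hN : 1 ≤ N := Nat.one_le_cast.mpr Fintype.card_pos
  have hTT : 0 ≤ trace (T * T) := by
    nth_rw 1 [← hT]
    exact (Finset.sum_nonneg fun j _ => sq_nonneg (T j j)).trans
      (sum_diag_sq_le_trace_transpose_mul_self T)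
  rw [hZ.integral_trace_gram_sq]
  simp only [transpose_smul, hT, trace_smul, Matrix.smul_mul, Matrix.mul_smul, smul_eq_mul]
  calc (N⁻¹ * trace T) ^ 2 * trace (T * T) + N⁻¹ * (N⁻¹ * trace (T * T)) * trace (T * T) +
        N⁻¹ * (N⁻¹ * trace (T * T)) * trace T ^ 2
      = N⁻¹ ^ 2 * (2 * trace T ^ 2 * trace (T * T) + trace (T * T) ^ 2) := by ring
    _ ≤ N⁻¹ ^ 2 * (2 * (κ * N) ^ 2 * (κ ^ 2 * N) + (κ ^ 2 * N) ^ 2) := by gcongr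
    _ = κ ^ 4 * (2 * N + 1) := by field_simp
    _ ≤ 3 * κ ^ 4 * N := by nlinarith [sq_nonneg (κ ^ 2)]

lemma integral_trace_sub_compression_le {δ : ℝ} (hZ : IsMatrixNormal P Z (a • T) T) (ha : 0 ≤ a)
    (hT : 0 ≤ trace T) (hp : pᵀ = p) (hpp : p * p = p) (hδ : trace T - trace (p * T * p) ≤ δ) :
    ∫ ω, trace ((Z ω - p * Z ω * p)ᵀ * (Z ω - p * Z ω * p)) ∂P ≤ 2 * a * trace T * δ := by
  simp only [trace_transpose_mul_self_sub_compression hp hpp]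
  have hcompression := hZ.compression hp
  rw [integral_sub hZ.integrable_trace_transpose_mul_self
      hcompression.integrable_trace_transpose_mul_self, hZ.integral_trace_transpose_mul_self,
    hcompression.integral_trace_transpose_mul_self]
  simp only [trace_smul, smul_eq_mul]
  nlinarith [mul_nonneg ha (sq_nonneg (trace T - trace (p * T * p))),
    mul_le_mul_of_nonneg_left hδ (mul_nonneg ha hT)]

lemma integrable_trace_sub_compression (hZ : IsMatrixNormal P Z (a • T) T) (hp : pᵀ = p)
    (hpp : p * p = p) :
    Integrable (fun ω => trace ((Z ω - p * Z ω * p)ᵀ * (Z ω - p * Z ω * p))) P := by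
  simp only [trace_transpose_mul_self_sub_compression hp hpp]
  exact hZ.integrable_trace_transpose_mul_self.sub
    (hZ.compression hp).integrable_trace_transpose_mul_self

lemma two_mul_trace_mul_trace_mul_le_integral {S : Matrix n n ℝ}
    (hZ : IsMatrixNormal P Z (a • T) T) (ha : 0 ≤ a) (hT : T.PosSemidef) (hS : S.PosSemidef) :
    2 * a * trace T * trace (T * S) ≤
      ∫ ω, trace ((Z ω + (Z ω)ᵀ) * (Z ω + (Z ω)ᵀ) * S) ∂P := by
  have hTTS : 0 ≤ trace (T * T * S) := by
    refine trace_mul_nonneg_of_posSemidef ?_ hS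
    simpa only [hT.isHermitian.eq] using posSemidef_self_mul_conjTranspose T
  rw [hZ.integral_trace_add_transpose_sq_mul]
  simp only [Matrix.smul_mul, Matrix.mul_smul, Matrix.add_mul, trace_add, trace_smul, smul_eq_mul]
  nlinarith [mul_nonneg ha hTTS]

theorem exists_integrable_le_sum_min_eigenvalues [DecidableEq n] {H E S : Matrix n n ℝ} {c L Q : ℝ}
    (hZ : IsMatrixNormal P Z ((Fintype.card n : ℝ)⁻¹ • T) T) (hT : T.PosSemidef)
    (hTHE : T = H + E) (hc : 0 ≤ c) (hH : (c • 1 - H).PosSemidef) (hE : E.PosSemidef)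
    (hS : S.PosSemidef) (hL : 0 ≤ L) (hSL : (L • 1 - S).PosSemidef) (hQ : 0 < Q)
    (hSS : trace (S * S) ≤ 2 * (Fintype.card n : ℝ)⁻¹ * trace T * trace (T * S)) :
    ∃ Ψ : Ω → ℝ, Integrable Ψ P ∧
      (∀ ω (hA : (Z ω + (Z ω)ᵀ).IsHermitian),
        Ψ ω ≤ ∑ j, min (hA.eigenvalues j ^ 4) (Q ^ 2)) ∧
      trace (S * S) - 2 * L * (16 / Q * (3 * (2 * c) ^ 4 * Fintype.card n) +
        8 * (2 * (Fintype.card n : ℝ)⁻¹ * trace T * (2 * trace E))) ≤ ∫ ω, Ψ ω ∂P := by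
  obtain ⟨p, hp, hpp, hB0, hB, hBB, htail⟩ := exists_spectral_truncation hc hT hTHE hH hE
  have ha : 0 ≤ (Fintype.card n : ℝ)⁻¹ := by positivity
  have hB_symm : (p * T * p)ᵀ = p * T * p := by
    rw [transpose_mul, transpose_mul, hp, ← conjTranspose_eq_transpose_of_trivial T,
      hT.isHermitian.eq, Matrix.mul_assoc]
  have hcompression := hZ.compression hp
  have hbulk := hcompression.integrable_trace_gram_sq.const_mul (16 / Q)
  have hrest := (hZ.integrable_trace_sub_compression hp hpp).const_mul 8
  have hsq := (hZ.integrable_trace_add_transpose_sq_mul S).const_mul 2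
  set gain : Ω → ℝ := fun ω =>
    2 * trace ((Z ω + (Z ω)ᵀ) * (Z ω + (Z ω)ᵀ) * S) - trace (S * S)
  set loss : Ω → ℝ := fun ω =>
    16 / Q * trace ((p * Z ω * p)ᵀ * (p * Z ω * p) * ((p * Z ω * p)ᵀ * (p * Z ω * p))) +
      8 * trace ((Z ω - p * Z ω * p)ᵀ * (Z ω - p * Z ω * p))
  have hgain : Integrable gain P := hsq.sub (integrable_const _)
  have hloss : Integrable loss P := hbulk.add hrest
  have hgain_le : trace (S * S) ≤ ∫ ω, gain ω ∂P := by
    rw [integral_sub hsq (integrable_const _), integral_const_mul, integral_const, probReal_univ,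
      one_smul]
    linarith [hZ.two_mul_trace_mul_trace_mul_le_integral ha hT hS]
  have hloss_le : ∫ ω, loss ω ∂P ≤ 16 / Q * (3 * (2 * c) ^ 4 * Fintype.card n) +
      8 * (2 * (Fintype.card n : ℝ)⁻¹ * trace T * (2 * trace E)) := by
    rw [integral_add hbulk hrest, integral_const_mul, integral_const_mul]
    gcongr
    exacts [hcompression.integral_trace_gram_sq_smul_le hB_symm hB0 hB hBB,
      hZ.integral_trace_sub_compression_le ha hT.trace_nonneg hp hpp htail]
  refine ⟨fun ω => gain ω - 2 * L * loss ω, hgain.sub (hloss.const_mul _),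
    fun ω hA => two_mul_trace_sq_mul_sub_le_sum_min_eigenvalues hA
      (by rw [add_sub_cancel]) hL hS hSL hQ, ?_⟩
  rw [integral_sub hgain (hloss.const_mul _), integral_const_mul]
  gcongr

end IsMatrixNormal

section ConvergenceInProbability

variable {Ω : Type*} [MeasurableSpace Ω] {P : Measure Ω} [IsProbabilityMeasure P]

lemma integral_le_add_measureReal_mul {Ψ : Ω → ℝ} {A : Set Ω} {c D : ℝ} (hΨ : Integrable Ψ P)
    (hc : ∀ ω ∉ A, Ψ ω ≤ c) (hcD : ∀ ω, Ψ ω ≤ c + D) :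
    ∫ ω, Ψ ω ∂P ≤ c + P.real A * D := by
  set B := toMeasurable P A
  have hB : MeasurableSet B := measurableSet_toMeasurable P A
  have hbound (ω : Ω) : Ψ ω ≤ c + B.indicator (fun _ => D) ω := by
    by_cases hω : ω ∈ B
    · simpa only [Set.indicator_of_mem hω] using hcD ω
    · simpa only [Set.indicator_of_notMem hω, add_zero] using
        hc ω fun h => hω (subset_toMeasurable P A h)
  have hint : Integrable (B.indicator fun _ => D) P := (integrable_const D).indicator hB
  calc ∫ ω, Ψ ω ∂P ≤ ∫ ω, (c + B.indicator (fun _ => D) ω) ∂P :=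
        integral_mono hΨ ((integrable_const c).add hint) hbound
    _ = c + P.real A * D := by
        rw [integral_add (integrable_const c) hint, integral_const, integral_indicator_const _ hB,
          probReal_univ, one_smul, smul_eq_mul, Measure.real, measure_toMeasurable, Measure.real]

lemma le_of_tendsto_measure_of_eventually_le_integral {F : ℕ → Ω → ℝ} {b c l : ℝ}
    (hF : ∀ ε > 0, Tendsto (fun N => P {ω | ε ≤ |F N ω - c|}) atTop (nhds 0))
    (hb : ∀ N ω, F N ω ≤ b)
    (hl : ∀ᶠ N in atTop, ∃ Ψ : Ω → ℝ, Integrable Ψ P ∧ (∀ ω, Ψ ω ≤ F N ω) ∧ l ≤ ∫ ω, Ψ ω ∂P) :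
    l ≤ c := by
  refine le_of_forall_pos_le_add fun ε hε => ?_
  have hlim : Tendsto (fun N => c + ε + P.real {ω | ε ≤ |F N ω - c|} * |b - c|) atTop
      (nhds (c + ε)) := by
    have hreal : Tendsto (fun N => P.real {ω | ε ≤ |F N ω - c|}) atTop (nhds 0) :=
      (ENNReal.tendsto_toReal ENNReal.zero_ne_top).comp (hF ε hε)
    simpa only [ENNReal.toReal_zero, zero_mul, add_zero] using
      (hreal.mul_const |b - c|).const_add (c + ε)
  refine ge_of_tendsto hlim (hl.mono fun N ⟨Ψ, hΨ, hΨF, hlΨ⟩ => hlΨ.trans ?_)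
  refine integral_le_add_measureReal_mul hΨ (fun ω hω => ?_) fun ω => ?_
  · have : |F N ω - c| < ε := not_le.mp hω
    linarith [hΨF ω, le_abs_self (F N ω - c)]
  · linarith [hΨF ω, hb N ω, le_abs_self (b - c)]

end ConvergenceInProbability

lemma esdEval_le {N : ℕ} (A : Matrix (Fin N) (Fin N) ℝ) {g : ℝ → ℝ} {b : ℝ} (hb : 0 ≤ b)
    (hg : ∀ t, g t ≤ b) : esdEval A g ≤ b := by
  rw [esdEval]
  split_ifs with hA
  · rcases N.eq_zero_or_pos with rfl | hN
    · simpa only [Nat.cast_zero, inv_zero, zero_mul] using hb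
    · rw [inv_mul_le_iff₀ (Nat.cast_pos.mpr hN)]
      simpa only [Finset.card_univ, Fintype.card_fin, nsmul_eq_mul] using
        Finset.sum_le_card_nsmul Finset.univ (fun j => g (hA.eigenvalues j)) b fun j _ => hg _
  · exact hb

lemma integral_min_pow_four_le_toReal_lintegral {μ : Measure ℝ}
    (hμ : ∫⁻ t, ENNReal.ofReal (t ^ 4) ∂μ ≠ ⊤) (Q : ℝ) :
    ∫ t, min (t ^ 4) (Q ^ 2) ∂μ ≤ (∫⁻ t, ENNReal.ofReal (t ^ 4) ∂μ).toReal := by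
  have hcont : Continuous fun t : ℝ => min (t ^ 4) (Q ^ 2) := by fun_prop
  rw [integral_eq_lintegral_of_nonneg_ae (.of_forall fun t => by positivity)
    hcont.aestronglyMeasurable]
  exact ENNReal.toReal_mono hμ
    (lintegral_mono fun t => ENNReal.ofReal_le_ofReal (min_le_left _ _))

/-- A stationary Gaussian field whose spectral measure has the density `w x * w y`, where the weight
`w` is nonnegative, even and integrable on `(-π, π]`. -/
structure HasProductSpectrum {Ω : Type*} [MeasurableSpace Ω] (P : Measure Ω) (X : ℤ → ℤ → Ω → ℝ)
    (w : ℝ → ℝ) : Prop where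
  statGauss : StatGauss P X
  hasSpecDensity : HasSpecDensity P X fun q => w q.1 * w q.2
  nonneg : ∀ x, 0 ≤ w x
  even : ∀ x, w (-x) = w x
  integrableOn : IntegrableOn w (Set.Ioc (-π) π)

namespace HasProductSpectrum

variable {Ω : Type*} [MeasurableSpace Ω] {P : Measure Ω} {X : ℤ → ℤ → Ω → ℝ} {w : ℝ → ℝ}

lemma cosCoeff_zero_pos (hX : HasProductSpectrum P X w) : 0 < cosCoeff w 0 := by
  have hvar := hX.statGauss.var_pos
  simp only [sq, integral_mul_eq_cosCoeff_mul_cosCoeff hX.statGauss hX.integrableOn hX.even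
    hX.hasSpecDensity, sub_zero] at hvar
  exact (cosCoeff_zero_nonneg hX.nonneg).lt_of_ne fun h => by simp [← h] at hvar

variable [IsProbabilityMeasure P]

theorem exists_integrable_le_esdEval (hX : HasProductSpectrum P X w) (n m : ℕ) {Q : ℝ} (hQ : 0 < Q)
    {N : ℕ} (hN : N ≠ 0) :
    ∃ Ψ : Ω → ℝ, Integrable Ψ P ∧
      (∀ ω, Ψ ω ≤ esdEval (scaledW X N ω) fun t => min (t ^ 4) (Q ^ 2)) ∧
      (N : ℝ)⁻¹ * ((2 * cosCoeff w 0) ^ 2 * Matrix.trace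
          (toeplitz (fun x => min (w x) n) N * toeplitz (fun x => min (w x) n) N)) -
        2 * (2 * cosCoeff w 0 * (2 * π * n)) * (48 * (2 * (2 * π * m)) ^ 4 / Q +
          32 * cosCoeff w 0 * ∫ x in Set.Ioc (-π) π, (w x - min (w x) m)) ≤ ∫ ω, Ψ ω ∂P := by
  set r := cosCoeff w 0
  have hr : 0 ≤ 2 * r := mul_nonneg zero_le_two (cosCoeff_zero_nonneg hX.nonneg)
  have hw := hX.integrableOn
  have hmin (k : ℕ) : IntegrableOn (fun x => min (w x) k) (Set.Ioc (-π) π) :=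
    integrable_min_natCast hw hX.nonneg k
  have hmin0 (x : ℝ) : 0 ≤ min (w x) n := le_min (hX.nonneg x) n.cast_nonneg
  have hcap (k : ℕ) := posSemidef_smul_one_sub_toeplitz (hmin k) (fun x => min_le_right (w x) k) N
  have hZ : IsMatrixNormal P (fun ω => (√N)⁻¹ • fieldMatrix X N ω)
      ((Fintype.card (Fin N) : ℝ)⁻¹ • toeplitz w N) (toeplitz w N) := by
    simpa only [Fintype.card_fin] using isMatrixNormal_inv_sqrt_smul_fieldMatrix hX.statGauss hw
      hX.even hX.hasSpecDensity N
  have hdecomp : toeplitz w N =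
      toeplitz (fun x => min (w x) m) N + toeplitz (fun x => w x - min (w x) m) N := by
    rw [toeplitz_sub hw (hmin m), add_sub_cancel]
  obtain ⟨Ψ, hΨ, hle, hint⟩ := hZ.exists_integrable_le_sum_min_eigenvalues
    (posSemidef_toeplitz hw hX.nonneg N)
    hdecomp (by positivity) (hcap m)
    (posSemidef_toeplitz (hw.sub (hmin m)) (fun x => sub_nonneg.mpr (min_le_left _ _)) N)
    ((posSemidef_toeplitz (hmin n) hmin0 N).smul hr) (by positivity : 0 ≤ 2 * r * (2 * π * n))
    (by simpa only [smul_sub, smul_smul] using (hcap n).smul hr) hQ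
    (by simpa only [Fintype.card_fin] using
      trace_smul_toeplitz_mul_self_le hw (hmin n) hmin0 (fun x => min_le_left _ _) hN)
  simp only [← scaledW_eq_add_transpose] at hle
  refine ⟨fun ω => (N : ℝ)⁻¹ * Ψ ω, hΨ.const_mul _, fun ω => ?_, ?_⟩
  · have hA : (scaledW X N ω).IsHermitian := by
      rw [scaledW_eq_add_transpose]
      exact Matrix.isHermitian_add_transpose_self _
    rw [esdEval, dif_pos hA]
    exact mul_le_mul_of_nonneg_left (hle ω hA) (by positivity)
  · rw [integral_const_mul]
    refine le_of_eq_of_le ?_ (mul_le_mul_of_nonneg_left hint (by positivity))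
    simp only [trace_toeplitz, cosCoeff_zero_right (fun x => w x - min (w x) m), Fintype.card_fin,
      Matrix.smul_mul, Matrix.mul_smul, Matrix.trace_smul, smul_eq_mul]
    field_simp
    ring

theorem le_integral_min_pow_four (hX : HasProductSpectrum P X w) {μ : Measure ℝ}
    (hconv : ESDTendstoInProb P (scaledW X) μ) (n m : ℕ) {Q C : ℝ} (hQ : 0 < Q)
    (hC : C < 2 * π * ∫ x in Set.Ioc (-π) π, min (w x) n ^ 2) :
    (2 * cosCoeff w 0) ^ 2 * C - 2 * (2 * cosCoeff w 0 * (2 * π * n)) *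
        (48 * (2 * (2 * π * m)) ^ 4 / Q +
          32 * cosCoeff w 0 * ∫ x in Set.Ioc (-π) π, (w x - min (w x) m)) ≤
      ∫ t, min (t ^ 4) (Q ^ 2) ∂μ := by
  have hQ2 (t : ℝ) : |min (t ^ 4) (Q ^ 2)| ≤ Q ^ 2 := by
    rw [abs_of_nonneg (by positivity)]
    exact min_le_right _ _
  have hmem : MemLp (fun x => min (w x) n) 2 (volume.restrict (Set.Ioc (-π) π)) := by
    refine .of_bound (integrable_min_natCast hX.integrableOn hX.nonneg n).aestronglyMeasurable n
      (.of_forall fun x => ?_)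
    rw [norm_of_nonneg (le_min (hX.nonneg x) n.cast_nonneg)]
    exact min_le_right _ _
  refine le_of_tendsto_measure_of_eventually_le_integral (hconv _ (by fun_prop) ⟨_, hQ2⟩)
    (fun N ω => esdEval_le _ (sq_nonneg Q) fun t => min_le_right _ _) ?_
  filter_upwards [eventually_mul_le_trace_toeplitz_sq hmem (fun x => by rw [hX.even]) hC,
    eventually_ne_atTop 0] with N htrace hN
  obtain ⟨Ψ, hΨ, hle, hint⟩ := hX.exists_integrable_le_esdEval n m hQ hN
  refine ⟨Ψ, hΨ, hle, le_trans (sub_le_sub_right ?_ _) hint⟩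
  rw [le_inv_mul_iff₀ (by positivity), mul_left_comm]
  gcongr

theorem sq_mul_le_toReal_lintegral_pow_four (hX : HasProductSpectrum P X w) {μ : Measure ℝ}
    (hconv : ESDTendstoInProb P (scaledW X) μ) (hμ : ∫⁻ t, ENNReal.ofReal (t ^ 4) ∂μ ≠ ⊤) (n : ℕ)
    {C : ℝ} (hC : C < 2 * π * ∫ x in Set.Ioc (-π) π, min (w x) n ^ 2) :
    (2 * cosCoeff w 0) ^ 2 * C ≤ (∫⁻ t, ENNReal.ofReal (t ^ 4) ∂μ).toReal := by
  set r := cosCoeff w 0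
  have hQlim (m : ℕ) : (2 * r) ^ 2 * C - 2 * (2 * r * (2 * π * n)) *
      (0 + 32 * r * ∫ x in Set.Ioc (-π) π, (w x - min (w x) m)) ≤
        (∫⁻ t, ENNReal.ofReal (t ^ 4) ∂μ).toReal := by
    have hlim : Tendsto (fun Q : ℝ => 48 * (2 * (2 * π * m)) ^ 4 / Q) atTop (nhds 0) :=
      tendsto_const_nhds.div_atTop tendsto_id
    refine le_of_tendsto (((hlim.add_const _).const_mul _).const_sub _) ?_
    filter_upwards [eventually_gt_atTop 0] with Q hQ
    exact (hX.le_integral_min_pow_four hconv n m hQ hC).trans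
      (integral_min_pow_four_le_toReal_lintegral hμ Q)
  have hmlim := tendsto_integral_sub_min_natCast hX.integrableOn hX.nonneg
  simpa only [mul_zero, add_zero, sub_zero] using le_of_tendsto'
    ((((hmlim.const_mul (32 * r)).const_add 0).const_mul (2 * (2 * r * (2 * π * n)))).const_sub
      ((2 * r) ^ 2 * C)) hQlim

end HasProductSpectrum

section InvSqrtAbs

lemma intervalIntegrable_abs_rpow {s : ℝ} (hs : -1 < s) (a b : ℝ) :
    IntervalIntegrable (fun x => |x| ^ s) volume a b := by
  refine intervalIntegrable_of_even (fun x => by rw [abs_neg]) fun b hb => ?_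
  refine (intervalIntegral.intervalIntegrable_rpow' hs).congr fun x hx => ?_
  rw [Set.uIoc_of_le hb.le] at hx
  rw [abs_of_pos hx.1]

lemma not_integrableOn_abs_rpow_neg_half_sq :
    ¬ IntegrableOn (fun x : ℝ => (|x| ^ (-(1 / 2) : ℝ)) ^ 2) (Set.Ioc (-π) π) := by
  have hsq (x : ℝ) : (|x| ^ (-(1 / 2) : ℝ)) ^ 2 = ‖x⁻¹‖ := by
    rw [← rpow_mul_natCast (abs_nonneg x), norm_inv, norm_eq_abs]
    norm_num [rpow_neg_one]
  intro h
  simp only [hsq] at h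
  have hinv : IntervalIntegrable (fun x : ℝ => x⁻¹) volume (-π) π := by
    rw [intervalIntegrable_iff_integrableOn_Ioc_of_le (by linarith [pi_pos])]
    exact (integrable_norm_iff measurable_inv.aestronglyMeasurable).mp h
  rcases intervalIntegrable_inv_iff.mp hinv with heq | hzero
  · linarith [pi_pos]
  · exact hzero (Set.mem_uIcc_of_le (by linarith [pi_pos]) pi_pos.le)

lemma hasProductSpectrum_abs_rpow_neg_half {Ω : Type*} [MeasurableSpace Ω] {P : Measure Ω}
    {X : ℤ → ℤ → Ω → ℝ} (hX : StatGauss P X)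
    (hXf : HasSpecDensity P X fun q => |q.1 * q.2| ^ (-(1 / 2 : ℝ))) :
    HasProductSpectrum P X fun x => |x| ^ (-(1 / 2 : ℝ)) where
  statGauss := hX
  hasSpecDensity := by
    simpa only [abs_mul, mul_rpow (abs_nonneg _) (abs_nonneg _)] using hXf
  nonneg x := rpow_nonneg (abs_nonneg x) _
  even x := by rw [abs_neg]
  integrableOn := (intervalIntegrable_iff_integrableOn_Ioc_of_le (by linarith [pi_pos])).mp
    (intervalIntegrable_abs_rpow (by norm_num) (-π) π)

end InvSqrtAbs

theorem statement19_general {Ω : Type*} [MeasurableSpace Ω] {P : Measure Ω}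
    [IsProbabilityMeasure P] {X : ℤ → ℤ → Ω → ℝ} {w : ℝ → ℝ} (hX : HasProductSpectrum P X w)
    (hsq : ¬ IntegrableOn (fun x => w x ^ 2) (Set.Ioc (-π) π)) {μ : Measure ℝ}
    (hconv : ESDTendstoInProb P (scaledW X) μ) :
    ∫⁻ t, ENNReal.ofReal (t ^ 4) ∂μ = ⊤ := by
  by_contra hμ
  set M := (∫⁻ t, ENNReal.ofReal (t ^ 4) ∂μ).toReal
  have hr : 0 < (2 * cosCoeff w 0) ^ 2 := pow_pos (mul_pos two_pos hX.cosCoeff_zero_pos) 2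
  obtain ⟨n, hn⟩ := exists_le_integral_min_natCast_sq hX.integrableOn hX.nonneg hsq
    ((M / (2 * cosCoeff w 0) ^ 2 + 1) / (2 * π) + 1)
  have hn' : M / (2 * cosCoeff w 0) ^ 2 + 1 < 2 * π * ∫ x in Set.Ioc (-π) π, min (w x) n ^ 2 := by
    rw [← div_lt_iff₀' two_pi_pos]
    linarith
  have hM := hX.sq_mul_le_toReal_lintegral_pow_four hconv hμ n hn'
  rw [mul_add, mul_div_cancel₀ _ hr.ne', mul_one] at hM
  linarith

/-- **Example 4.4.** For the density `f(x,y) = |xy|^{-1/2}`, the fourth moment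
of the limiting spectral distribution is infinite. -/
theorem statement19 {Ω : Type} [MeasurableSpace Ω] (P : Measure Ω)
    [IsProbabilityMeasure P] (X : ℤ → ℤ → Ω → ℝ)
    (hX : StatGauss P X)
    (hXf : HasSpecDensity P X (fun q => |q.1 * q.2| ^ (-(1 / 2 : ℝ))))
    (μf : Measure ℝ) (hμf : IsProbabilityMeasure μf)
    (hconv : ESDTendstoInProb P (scaledW X) μf) :
    ∫⁻ t, ENNReal.ofReal (t ^ 4) ∂μf = ⊤ :=
  statement19_general (hasProductSpectrum_abs_rpow_neg_half hX hXf)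
    not_integrableOn_abs_rpow_neg_half_sq hconv

end
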